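/- arXiv:2406.10793 — 3 statements merged into one kernel-verified Lean document; each statement's English description precedes it below -/
import Mathlib

section
/- Under the SFBS iteration, for every solution z* (i.e. −F(z*) ∈ G(z*)) the following hold: (i) for all integers k ≥ 1, (1/(2L) + ρ − D/(2(r−1))) · k² · ‖F(z_k) + G̃_k‖² ≤ ((r³ − r²)/(2D)) · ‖z_0 − z*‖²; (ii) ∑_{k=0}^∞ (1/2)·[(r−1)(1/L + 2ρ) − D]·(2k + r + 1)·‖F(z_{k+1}) + G̃_{k+1}‖² ≤ ((r³ − r²)/(2D)) · ‖z_0 − z*‖². In particular, if D < (r−1)(1/L + 2ρ), then for all k ≥ 1, ‖F(z_k) + G̃_k‖² ≤ (r−1)²r² / (((r−1)(1/L + 2ρ)D − D²)·k²) · ‖z_0 − z*‖². -/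
open RealInnerProductSpace Filter

/-!
Write `t k` for the residual `F (z k) + G̃ k`. The energy is
`(1/(2L) + ρ) k² ‖t‖² + r k (⟪t, z - u⟫ - ρ ‖t‖²) + (r³ - r²)/(2D) ‖u - z*‖²`, and one iteration
acts on it in two moves. The extragradient step `z k ↦ z (k+1)` with the anchor `u k` held fixed
advances the time of the residual part from `k` to `k + r` without increasing it, by the Lipschitz
bound and comonotonicity between consecutive iterates. Going back from time `k + r` to `k + 1`
releases `(1/(2L) + ρ) (r - 1) (2k + r + 1) ‖t (k+1)‖²`; by comonotonicity against `z*`, the anchor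
update `u k ↦ u (k+1)` consumes at most the fraction `D / ((r - 1) (1/L + 2ρ))` of it. The remainder
is the general term of the series, and Young's inequality bounds the energy below by a multiple of
`k² ‖t k‖²`.
-/

section

variable {H : Type*} [NormedAddCommGroup H] [InnerProductSpace ℝ H]

lemma norm_sq_sub_norm_sq_le_two_mul_inner {x y s : H} (h : ‖x - s‖ ≤ ‖y - s‖) :
    ‖x‖ ^ 2 - ‖y‖ ^ 2 ≤ 2 * ⟪x - y, s⟫ := by
  have hsq : ‖x - s‖ ^ 2 ≤ ‖y - s‖ ^ 2 := by gcongr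
  rw [norm_sub_sq_real, norm_sub_sq_real] at hsq
  rw [inner_sub_left]
  linarith

lemma inner_sub_add_inner_sub (t x y z : H) : ⟪t, x - y⟫ + ⟪t, y - z⟫ = ⟪t, x - z⟫ := by
  rw [← inner_add_right, sub_add_sub_cancel]

lemma inner_smul_sub_smul_affine_sub (a b : ℝ) (x y z z' u : H) :
    ⟪b • y - a • x, a • z + (b - a) • u - b • z'⟫ =
      (b - a) * a * ⟪x, z - u⟫ - (b - a) * b * ⟪y, z' - u⟫ - a * b * ⟪y - x, z' - z⟫ := by
  simp only [inner_sub_left, inner_sub_right, inner_add_right, real_inner_smul_left,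
    real_inner_smul_right]
  ring

lemma mul_inner_le_norm_sq_add_norm_sq {c : ℝ} (hc : 0 < c) (a : ℝ) (x y : H) :
    a * ⟪x, y⟫ ≤ c * ‖y‖ ^ 2 + a ^ 2 / (4 * c) * ‖x‖ ^ 2 := by
  have hsq : 0 ≤ c * ‖y - (a / (2 * c)) • x‖ ^ 2 := by positivity
  have hexpand : c * ‖y - (a / (2 * c)) • x‖ ^ 2 =
      c * ‖y‖ ^ 2 - a * ⟪x, y⟫ + a ^ 2 / (4 * c) * ‖x‖ ^ 2 := by
    rw [norm_sub_sq_real, norm_smul, mul_pow, Real.norm_eq_abs, sq_abs, real_inner_smul_right,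
      real_inner_comm]
    field_simp
    ring
  linarith

/-- The residual part of the SFBS energy at a point `z` with residual `t` and anchor `u`. The time
`k` is a real number because the extragradient step advances it by `r`. -/
noncomputable def residualPotential (L ρ r k : ℝ) (z u t : H) : ℝ :=
  (1 / (2 * L) + ρ) * k ^ 2 * ‖t‖ ^ 2 + r * k * (⟪t, z - u⟫ - ρ * ‖t‖ ^ 2)

/-- The Lyapunov function of SFBS relative to a solution `p`: the residual potential plus a multiple
of the squared distance from the anchor `u` to `p`. -/
noncomputable def sfbsEnergy (L ρ r D k : ℝ) (p z u t : H) : ℝ :=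
  residualPotential L ρ r k z u t + (r ^ 3 - r ^ 2) / (2 * D) * ‖u - p‖ ^ 2

variable {L ρ r D k : ℝ} {p z z' u t t' s : H}

lemma sfbsEnergy_zero : sfbsEnergy L ρ r D 0 p z u t = (r ^ 3 - r ^ 2) / (2 * D) * ‖u - p‖ ^ 2 := by
  simp [sfbsEnergy, residualPotential]

lemma residualPotential_add_le (hL : 0 < L) (hk : 0 ≤ k) (hr : 0 ≤ r)
    (hstep : (k + r) • z' = k • z + r • u - ((k + r) / L) • s - (2 * ρ * k) • t)
    (hres : ‖(k + r) • t' - (k + r) • s‖ ≤ ‖k • t - (k + r) • s‖)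
    (hcomono : ρ * ‖t' - t‖ ^ 2 ≤ ⟪t' - t, z' - z⟫) :
    residualPotential L ρ r (k + r) z' u t' ≤ residualPotential L ρ r k z u t := by
  set v := (k + r) • t' - k • t with hv
  have hgrowth : (k + r) ^ 2 * ‖t'‖ ^ 2 - k ^ 2 * ‖t‖ ^ 2 ≤ 2 * ((k + r) * ⟪v, s⟫) := by
    simpa [norm_smul, mul_pow, real_inner_smul_right] using
      norm_sq_sub_norm_sq_le_two_mul_inner hres
  have hpair : (k + r) * ⟪v, s⟫ / L = ⟪v, k • z + r • u - (k + r) • z'⟫ - 2 * ρ * k * ⟪v, t⟫ := by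
    rw [mul_div_right_comm, ← real_inner_smul_right, ← real_inner_smul_right, ← inner_sub_right,
      hstep]
    congr 1
    abel
  have hpolar : ⟪v, k • z + r • u - (k + r) • z'⟫ = r * k * ⟪t, z - u⟫
      - r * (k + r) * ⟪t', z' - u⟫ - k * (k + r) * ⟪t' - t, z' - z⟫ := by
    simpa using inner_smul_sub_smul_affine_sub k (k + r) t t' z z' u
  have hvt : ⟪v, t⟫ = (k + r) * ⟪t', t⟫ - k * ‖t‖ ^ 2 := by
    rw [hv, inner_sub_left, real_inner_smul_left, real_inner_smul_left, real_inner_self_eq_norm_sq]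
  have hmain : ((k + r) ^ 2 * ‖t'‖ ^ 2 - k ^ 2 * ‖t‖ ^ 2) / (2 * L) ≤ (k + r) * ⟪v, s⟫ / L := by
    rw [div_le_div_iff₀ (by positivity) hL]
    linarith [mul_le_mul_of_nonneg_right hgrowth hL.le]
  have hmono := mul_le_mul_of_nonneg_left hcomono (by positivity : 0 ≤ k * (k + r))
  rw [hpair, hpolar, hvt] at hmain
  rw [norm_sub_sq_real] at hmono
  unfold residualPotential
  linear_combination hmain + hmono

lemma mul_norm_anchor_step_sub_sq (hr : r ≠ 0) (hD : D ≠ 0) :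
    (r ^ 3 - r ^ 2) / (2 * D) * ‖u - (D / r) • t - p‖ ^ 2 =
      (r ^ 3 - r ^ 2) / (2 * D) * ‖u - p‖ ^ 2 - r * (r - 1) * ⟪t, u - p⟫
        + (r - 1) * D / 2 * ‖t‖ ^ 2 := by
  rw [sub_right_comm, norm_sub_sq_real, norm_smul, mul_pow, Real.norm_eq_abs, sq_abs,
    real_inner_smul_right, real_inner_comm]
  field_simp

lemma sfbsEnergy_anchor_add_le (hr : 1 < r) (hD : D ≠ 0)
    (hp : ρ * ‖t‖ ^ 2 ≤ ⟪t, z - p⟫) :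
    sfbsEnergy L ρ r D (k + 1) p z (u - (D / r) • t) t
        + 1 / 2 * ((r - 1) * (1 / L + 2 * ρ) - D) * (2 * k + r + 1) * ‖t‖ ^ 2
      ≤ sfbsEnergy L ρ r D (k + r) p z u t := by
  have hr0 : 0 < r := by linarith
  have hsol := mul_le_mul_of_nonneg_left hp (by nlinarith : 0 ≤ r * (r - 1))
  have hinner : r * ⟪t, z - (u - (D / r) • t)⟫ = r * ⟪t, z - u⟫ + D * ‖t‖ ^ 2 := by
    rw [sub_sub_eq_add_sub, add_sub_right_comm, inner_add_right, real_inner_smul_right,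
      real_inner_self_eq_norm_sq]
    field_simp
  have hL2 : 1 / (2 * L) = 1 / L / 2 := by ring
  unfold sfbsEnergy residualPotential
  rw [mul_norm_anchor_step_sub_sq hr0.ne' hD, hL2]
  rw [← inner_sub_add_inner_sub t z u p] at hsol
  linear_combination hsol + (k + 1) * hinner

lemma le_sfbsEnergy (hr : 1 < r) (hD : 0 < D) (hk : 0 ≤ k) (hp : ρ * ‖t‖ ^ 2 ≤ ⟪t, z - p⟫) :
    (1 / (2 * L) + ρ - D / (2 * (r - 1))) * k ^ 2 * ‖t‖ ^ 2 ≤ sfbsEnergy L ρ r D k p z u t := by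
  have hr1 : 0 < r - 1 := by linarith
  have hc : (r ^ 3 - r ^ 2) / (2 * D) = r ^ 2 * (r - 1) / (2 * D) := by ring
  have hyoung := mul_inner_le_norm_sq_add_norm_sq (by positivity : 0 < r ^ 2 * (r - 1) / (2 * D))
    (r * k) t (u - p)
  have hcoeff : (r * k) ^ 2 / (4 * (r ^ 2 * (r - 1) / (2 * D))) = D / (2 * (r - 1)) * k ^ 2 := by
    field_simp
    norm_num
  have hsol := mul_le_mul_of_nonneg_left hp (by positivity : 0 ≤ r * k)
  rw [hcoeff] at hyoung
  rw [← inner_sub_add_inner_sub t z u p] at hsol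
  unfold sfbsEnergy residualPotential
  rw [hc]
  linear_combination hyoung + hsol

end

/-- The SFBS recursion, written in terms of residuals: `t k` stands for `F (z k) + G̃ k`, the
half-step residual `s k` for `F (z (k + 1/2)) + G̃ (k + 1)`, and `zh k` for `z (k + 1/2)`. -/
structure IsSFBSTrajectory {H : Type*} [NormedAddCommGroup H] [InnerProductSpace ℝ H]
    (L ρ r D : ℝ) (z zh zt u t s : ℕ → H) : Prop where
  u_zero : u 0 = z 0
  zt_succ : ∀ k : ℕ, zt (k + 1) = ((k : ℝ) / (k + r)) • z k + (r / (k + r)) • u k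
  zh_eq : ∀ k : ℕ, zh k = zt (k + 1) - ((k : ℝ) / (k + r) * (1 / L + 2 * ρ)) • t k
  z_succ : ∀ k : ℕ, z (k + 1) = zt (k + 1) - (1 / L) • s k - ((2 * ρ * k) / (k + r)) • t k
  u_succ : ∀ k : ℕ, u (k + 1) = u k - (D / r) • t (k + 1)

namespace IsSFBSTrajectory

variable {H : Type*} [NormedAddCommGroup H] [InnerProductSpace ℝ H]
  {L ρ r D : ℝ} {z zh zt u t s : ℕ → H} {p : H}

lemma smul_z_succ (h : IsSFBSTrajectory L ρ r D z zh zt u t s) (hr : 0 < r) (k : ℕ) :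
    (k + r) • z (k + 1) =
      (k : ℝ) • z k + r • u k - ((k + r) / L) • s k - (2 * ρ * k) • t k := by
  have hkr : (k + r : ℝ) ≠ 0 := by positivity
  rw [h.z_succ, h.zt_succ]
  match_scalars <;> field_simp

lemma smul_z_succ_sub_zh (h : IsSFBSTrajectory L ρ r D z zh zt u t s) (hr : 0 < r) (hL : L ≠ 0)
    (k : ℕ) :
    (L * (k + r)) • (z (k + 1) - zh k) = (k : ℝ) • t k - (k + r) • s k := by
  have hkr : (k + r : ℝ) ≠ 0 := by positivity
  rw [h.z_succ, h.zh_eq]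
  match_scalars <;> field_simp <;> ring

lemma norm_smul_residual_sub_le (h : IsSFBSTrajectory L ρ r D z zh zt u t s) (hr : 0 < r)
    (hL : 0 < L) {k : ℕ} (hLip : ‖t (k + 1) - s k‖ ≤ L * ‖z (k + 1) - zh k‖) :
    ‖(k + r) • t (k + 1) - (k + r) • s k‖ ≤ ‖(k : ℝ) • t k - (k + r) • s k‖ := by
  have hkr : 0 < k + r := by positivity
  calc ‖(k + r) • t (k + 1) - (k + r) • s k‖
      = (k + r) * ‖t (k + 1) - s k‖ := by
        rw [← smul_sub, norm_smul, Real.norm_of_nonneg hkr.le]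
    _ ≤ (k + r) * (L * ‖z (k + 1) - zh k‖) := by gcongr
    _ = ‖(L * (k + r)) • (z (k + 1) - zh k)‖ := by
        rw [norm_smul, Real.norm_of_nonneg (by positivity)]
        ring
    _ = ‖(k : ℝ) • t k - (k + r) • s k‖ := by rw [h.smul_z_succ_sub_zh hr hL.ne']

lemma sfbsEnergy_succ_add_le (h : IsSFBSTrajectory L ρ r D z zh zt u t s)
    (hL : 0 < L) (hr : 1 < r) (hD : D ≠ 0) {k : ℕ}
    (hLip : ‖t (k + 1) - s k‖ ≤ L * ‖z (k + 1) - zh k‖)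
    (hcomono : ρ * ‖t (k + 1) - t k‖ ^ 2 ≤ ⟪t (k + 1) - t k, z (k + 1) - z k⟫)
    (hp : ρ * ‖t (k + 1)‖ ^ 2 ≤ ⟪t (k + 1), z (k + 1) - p⟫) :
    sfbsEnergy L ρ r D (k + 1) p (z (k + 1)) (u (k + 1)) (t (k + 1))
        + 1 / 2 * ((r - 1) * (1 / L + 2 * ρ) - D) * (2 * k + r + 1) * ‖t (k + 1)‖ ^ 2
      ≤ sfbsEnergy L ρ r D k p (z k) (u k) (t k) := by
  have hr0 : 0 < r := by linarith
  calc _ ≤ sfbsEnergy L ρ r D (k + r) p (z (k + 1)) (u k) (t (k + 1)) := by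
        rw [h.u_succ]
        exact sfbsEnergy_anchor_add_le hr hD hp
    _ ≤ sfbsEnergy L ρ r D k p (z k) (u k) (t k) := by
        unfold sfbsEnergy
        gcongr ?_ + _
        exact residualPotential_add_le hL k.cast_nonneg hr0.le (h.smul_z_succ hr0 k)
          (h.norm_smul_residual_sub_le hr0 hL hLip) hcomono

lemma sfbsEnergy_add_sum_le (h : IsSFBSTrajectory L ρ r D z zh zt u t s)
    (hL : 0 < L) (hr : 1 < r) (hD : D ≠ 0)
    (hLip : ∀ k, ‖t (k + 1) - s k‖ ≤ L * ‖z (k + 1) - zh k‖)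
    (hcomono : ∀ k, ρ * ‖t (k + 1) - t k‖ ^ 2 ≤ ⟪t (k + 1) - t k, z (k + 1) - z k⟫)
    (hp : ∀ k, ρ * ‖t k‖ ^ 2 ≤ ⟪t k, z k - p⟫) (n : ℕ) :
    sfbsEnergy L ρ r D n p (z n) (u n) (t n) + ∑ k ∈ Finset.range n,
        1 / 2 * ((r - 1) * (1 / L + 2 * ρ) - D) * (2 * (k : ℝ) + r + 1) * ‖t (k + 1)‖ ^ 2
      ≤ (r ^ 3 - r ^ 2) / (2 * D) * ‖z 0 - p‖ ^ 2 := by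
  induction n with
  | zero => simp [sfbsEnergy_zero, h.u_zero]
  | succ n ih =>
    rw [Finset.sum_range_succ, Nat.cast_succ]
    linarith [h.sfbsEnergy_succ_add_le hL hr hD (hLip n) (hcomono n) (hp (n + 1))]

end IsSFBSTrajectory

lemma residual_coeff_eq {r : ℝ} (hr : r ≠ 1) (L ρ D : ℝ) :
    1 / (2 * L) + ρ - D / (2 * (r - 1)) =
      ((r - 1) * (1 / L + 2 * ρ) - D) / (2 * (r - 1)) := by
  have hr1 : r - 1 ≠ 0 := sub_ne_zero.mpr hr
  rw [show 1 / (2 * L) = 1 / L / 2 by ring]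
  field_simp

lemma le_div_sq_of_residual_coeff_mul_le {L ρ r D k a b : ℝ} (hr : 1 < r) (hD0 : 0 < D)
    (hD : D < (r - 1) * (1 / L + 2 * ρ)) (hk : 0 < k)
    (h : (1 / (2 * L) + ρ - D / (2 * (r - 1))) * k ^ 2 * a ≤ (r ^ 3 - r ^ 2) / (2 * D) * b) :
    a ≤ (r - 1) ^ 2 * r ^ 2 / (((r - 1) * (1 / L + 2 * ρ) * D - D ^ 2) * k ^ 2) * b := by
  have hr1 : 0 < r - 1 := by linarith
  rw [residual_coeff_eq hr.ne'] at h
  set δ := (r - 1) * (1 / L + 2 * ρ) - D with hδ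
  have hδ0 : 0 < δ := sub_pos.mpr hD
  have hden : (r - 1) * (1 / L + 2 * ρ) * D - D ^ 2 = δ * D := by rw [hδ]; ring
  have hden_pos : 0 < δ / (2 * (r - 1)) * k ^ 2 := by positivity
  calc a ≤ (r ^ 3 - r ^ 2) / (2 * D) * b / (δ / (2 * (r - 1)) * k ^ 2) :=
        (le_div_iff₀' hden_pos).mpr h
    _ = _ := by
        rw [hden]
        field_simp

theorem sfbs_convergence_rate_general
    {H : Type*} [NormedAddCommGroup H] [InnerProductSpace ℝ H]
    {L ρ r D : ℝ} {z zh zt u t s : ℕ → H} {p : H}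
    (h : IsSFBSTrajectory L ρ r D z zh zt u t s)
    (hL : 0 < L) (hr : 1 < r) (hD0 : 0 < D) (hD : D ≤ (r - 1) * (1 / L + 2 * ρ))
    (hLip : ∀ k, ‖t (k + 1) - s k‖ ≤ L * ‖z (k + 1) - zh k‖)
    (hcomono : ∀ k, ρ * ‖t (k + 1) - t k‖ ^ 2 ≤ ⟪t (k + 1) - t k, z (k + 1) - z k⟫)
    (hp : ∀ k, ρ * ‖t k‖ ^ 2 ≤ ⟪t k, z k - p⟫) :
    (∀ k : ℕ, 1 ≤ k →
      (1 / (2 * L) + ρ - D / (2 * (r - 1))) * (k : ℝ) ^ 2 * ‖t k‖ ^ 2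
        ≤ (r ^ 3 - r ^ 2) / (2 * D) * ‖z 0 - p‖ ^ 2) ∧
    (∀ n : ℕ, ∑ k ∈ Finset.range n,
        1 / 2 * ((r - 1) * (1 / L + 2 * ρ) - D) * (2 * (k : ℝ) + r + 1) * ‖t (k + 1)‖ ^ 2
        ≤ (r ^ 3 - r ^ 2) / (2 * D) * ‖z 0 - p‖ ^ 2) ∧
    (D < (r - 1) * (1 / L + 2 * ρ) → ∀ k : ℕ, 1 ≤ k →
      ‖t k‖ ^ 2 ≤ (r - 1) ^ 2 * r ^ 2 / (((r - 1) * (1 / L + 2 * ρ) * D - D ^ 2) * (k : ℝ) ^ 2)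
          * ‖z 0 - p‖ ^ 2) := by
  have : 0 < r - 1 := by linarith
  have : 0 ≤ (r - 1) * (1 / L + 2 * ρ) - D := by linarith
  have hcoeff : 0 ≤ 1 / (2 * L) + ρ - D / (2 * (r - 1)) := by
    rw [residual_coeff_eq hr.ne']
    positivity
  have henergy := h.sfbsEnergy_add_sum_le hL hr hD0.ne' hLip hcomono hp
  have hlower (k : ℕ) := le_sfbsEnergy (L := L) (u := u k) hr hD0 k.cast_nonneg (hp k)
  have hrate (k : ℕ) : (1 / (2 * L) + ρ - D / (2 * (r - 1))) * (k : ℝ) ^ 2 * ‖t k‖ ^ 2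
      ≤ (r ^ 3 - r ^ 2) / (2 * D) * ‖z 0 - p‖ ^ 2 :=
    (hlower k).trans <| (le_add_of_nonneg_right <| by positivity).trans (henergy k)
  refine ⟨fun k _ => hrate k, fun n => ?_, fun hlt k hk => ?_⟩
  · have henergy_nonneg : 0 ≤ sfbsEnergy L ρ r D n p (z n) (u n) (t n) :=
      le_trans (by positivity) (hlower n)
    exact (le_add_of_nonneg_left henergy_nonneg).trans (henergy n)
  · exact le_div_sq_of_residual_coeff_mul_le hr hD0 hlt (by positivity) (hrate k)

/-- Convergence rates of the Symplectic Forward-Backward Splitting (SFBS) method. -/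
theorem sfbs_convergence_rate
    {H : Type*} [NormedAddCommGroup H] [InnerProductSpace ℝ H] [CompleteSpace H]
    (L ρ r D : ℝ) (F : H → H) (G : H → Set H)
    (z zh zt u Gt : ℕ → H)
    (hL : 0 < L) (hρ : -1/(2*L) < ρ)
    (hLip : ∀ x y : H, ‖F x - F y‖ ≤ L * ‖x - y‖)
    (hcomono : ∀ x y g h : H, g ∈ G x → h ∈ G y →
      ρ * ‖(F x + g) - (F y + h)‖^2 ≤ ⟪(F x + g) - (F y + h), x - y⟫)
    (hr : 1 < r) (hD0 : 0 < D) (hD : D ≤ (r - 1) * (1/L + 2*ρ))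
    (hu0 : u 0 = z 0) (hG0 : Gt 0 ∈ G (z 0))
    (hzt : ∀ k : ℕ, zt (k+1) = ((k : ℝ)/((k : ℝ) + r)) • z k + (r/((k : ℝ) + r)) • u k)
    (hzh : ∀ k : ℕ, zh k =
      zt (k+1) - ((k : ℝ)/((k : ℝ) + r) * (1/L + 2*ρ)) • (F (z k) + Gt k))
    (hz : ∀ k : ℕ, z (k+1) = zt (k+1) - (1/L) • (F (zh k) + Gt (k+1))
        - ((2*ρ*(k : ℝ))/((k : ℝ) + r)) • (F (z k) + Gt k))
    (hGt : ∀ k : ℕ, Gt (k+1) ∈ G (z (k+1)))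
    (hu : ∀ k : ℕ, u (k+1) = u k - (D/r) • (F (z (k+1)) + Gt (k+1)))
    (zs : H) (hzs : -F zs ∈ G zs) :
    (∀ k : ℕ, 1 ≤ k →
      (1/(2*L) + ρ - D/(2*(r-1))) * (k : ℝ)^2 * ‖F (z k) + Gt k‖^2
        ≤ (r^3 - r^2)/(2*D) * ‖z 0 - zs‖^2) ∧
    (∀ n : ℕ, ∑ k ∈ Finset.range n,
        (1/2) * ((r - 1) * (1/L + 2*ρ) - D) * (2*(k : ℝ) + r + 1)
          * ‖F (z (k+1)) + Gt (k+1)‖^2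
        ≤ (r^3 - r^2)/(2*D) * ‖z 0 - zs‖^2) ∧
    (D < (r - 1) * (1/L + 2*ρ) → ∀ k : ℕ, 1 ≤ k →
      ‖F (z k) + Gt k‖^2
        ≤ (r-1)^2 * r^2 / (((r - 1) * (1/L + 2*ρ) * D - D^2) * (k : ℝ)^2)
          * ‖z 0 - zs‖^2) := by
  have hG : ∀ k, Gt k ∈ G (z k) := fun
    | 0 => hG0
    | k + 1 => hGt k
  exact sfbs_convergence_rate_general (t := fun k => F (z k) + Gt k)
    (s := fun k => F (zh k) + Gt (k + 1)) ⟨hu0, hzt, hzh, hz, hu⟩ hL hr hD0 hD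
    (fun k => by simpa using hLip (z (k + 1)) (zh k))
    (fun k => hcomono _ _ _ _ (hG (k + 1)) (hG k))
    (fun k => by simpa using hcomono _ _ _ _ (hG k) hzs)
end

section
/- (Faster convergence rate) Under the step-size-s SFBS iteration with F L-Lipschitz, G such that T = F + G is ρ-comonotone with ρ > −1/(2L), max{0, −2ρ} < s < 1/L, r > 1 and 0 < D < (r−1)(s + 2ρ), the following hold: (i) lim_{k→∞} ‖z_k − u_k‖² = 0; (ii) for every solution z* (i.e. −F(z*) ∈ G(z*)), lim_{k→∞} ‖u_k − z*‖² exists; (iii) lim_{k→∞} k²·‖F(z_k) + G̃_k‖² = 0 (hence k²·dist(0, T(z_k))² → 0); (iv) lim_{k→∞} k²·‖z_{k+1} − z_k‖² = 0. -/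
/-!
Write `a k` for the residual `F (z k) + Gt k` and `d k` for `(z_{k+1/2} - z_{k+1}) / s`. Since `F`
is `L`-Lipschitz, `d k` differs from `a (k + 1) - (k / (k + r)) • a k` by at most `s * L * ‖d k‖`
with `s * L < 1`, and this is all that is used about the splitting `T = F + G`.

An exact identity for `potential` shows that `energy` is nonincreasing and bounded below along
the iteration, so it converges, and both `k² ‖d k‖²` and `k ‖a k‖²` are summable. The gap
`z k - u k` is contracted by the factor `k / (k + r)` up to a summable perturbation; hence
`‖z k - u k‖²` converges and `‖z k - u k‖² / k` is summable, which forces the limit to vanish.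
The inner products `⟪a k, z k - u k⟫` are then summable, so `potential` converges as well. It
agrees with `(s + 2ρ) / 2 * k² ‖a k‖²` up to `o(1)`, and the summability of `k ‖a k‖²` forces this
limit to vanish too. What remains in the limit of the energy is the multiple of `‖u k - w‖²`.
-/

open RealInnerProductSpace Filter
open scoped Topology

section Sequences

theorem exists_tendsto_of_succ_le_add_summable {x e : ℕ → ℝ} (hx : BddBelow (Set.range x))
    (he : Summable e) (h : ∀ n, x (n + 1) ≤ x n + e n) : ∃ l, Tendsto x atTop (𝓝 l) := by
  have partialSums := he.hasSum.tendsto_sum_nat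
  have antitone : Antitone fun n ↦ x n - ∑ i ∈ Finset.range n, e i := by
    refine antitone_nat_of_succ_le fun n ↦ ?_
    rw [Finset.sum_range_succ]
    linarith [h n]
  obtain ⟨B, hB⟩ := hx
  obtain ⟨C, hC⟩ := partialSums.bddAbove_range
  have bounded : BddBelow (Set.range fun n ↦ x n - ∑ i ∈ Finset.range n, e i) := by
    refine ⟨B - C, ?_⟩
    rintro _ ⟨n, rfl⟩
    exact sub_le_sub (hB ⟨n, rfl⟩) (hC ⟨n, rfl⟩)
  exact ⟨_, ((tendsto_atTop_ciInf antitone bounded).add partialSums).congr fun n ↦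
    sub_add_cancel _ _⟩

theorem summable_of_succ_add_le_add_summable {x y e : ℕ → ℝ} (hx : BddBelow (Set.range x))
    (hy : ∀ n, 0 ≤ y n) (he : Summable e) (h : ∀ n, x (n + 1) + y n ≤ x n + e n) :
    Summable y := by
  obtain ⟨B, hB⟩ := hx
  obtain ⟨C, hC⟩ := he.hasSum.tendsto_sum_nat.bddAbove_range
  have telescoped (n : ℕ) :
      x n + ∑ i ∈ Finset.range n, y i ≤ x 0 + ∑ i ∈ Finset.range n, e i := by
    induction n with
    | zero => simp
    | succ n ih =>
      rw [Finset.sum_range_succ, Finset.sum_range_succ]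
      linarith [h n]
  refine summable_of_sum_range_le (c := x 0 - B + C) hy fun n ↦ ?_
  linarith [telescoped n, hB ⟨n, rfl⟩, hC ⟨n, rfl⟩]

theorem eq_zero_of_tendsto_of_summable_div_natCast {x : ℕ → ℝ} {l : ℝ}
    (hl : Tendsto x atTop (𝓝 l)) (hx : Summable fun n : ℕ ↦ x n / n) : l = 0 := by
  by_contra hne
  have hbig : (fun n : ℕ ↦ x n / n * (x n)⁻¹) =O[atTop] fun n : ℕ ↦ x n / n := by
    simpa only [mul_one] using
      (Asymptotics.isBigO_refl (fun n : ℕ ↦ x n / n) atTop).mul ((hl.inv₀ hne).isBigO_one ℝ)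
  have hharm : (fun n : ℕ ↦ x n / n * (x n)⁻¹) =ᶠ[atTop] fun n : ℕ ↦ 1 / (n : ℝ) := by
    filter_upwards [hl.eventually_ne hne] with n hn
    field_simp
  exact Real.not_summable_one_div_natCast
    (summable_of_isBigO_nat hx (hharm.symm.trans_isBigO hbig))

end Sequences

section Norms

variable {ι E : Type*} [SeminormedAddCommGroup E]

theorem tendsto_zero_of_tendsto_norm_sq {l : Filter ι} {x : ι → E}
    (h : Tendsto (fun i ↦ ‖x i‖ ^ 2) l (𝓝 0)) : Tendsto x l (𝓝 0) := by
  rw [tendsto_zero_iff_norm_tendsto_zero]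
  simpa only [Real.sqrt_sq (norm_nonneg _), Real.sqrt_zero] using h.sqrt

theorem summable_mul_norm_sub_sq {c : ι → ℝ} {x y : ι → E} (hc : ∀ i, 0 ≤ c i)
    (hx : Summable fun i ↦ c i * ‖x i‖ ^ 2) (hy : Summable fun i ↦ c i * ‖y i‖ ^ 2) :
    Summable fun i ↦ c i * ‖x i - y i‖ ^ 2 := by
  refine .of_nonneg_of_le (fun i ↦ mul_nonneg (hc i) (sq_nonneg _)) (fun i ↦ ?_)
    ((hx.add hy).mul_left 2)
  calc c i * ‖x i - y i‖ ^ 2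
      ≤ c i * (‖x i‖ + ‖y i‖) ^ 2 := by gcongr; exacts [hc i, norm_sub_le _ _]
    _ ≤ c i * (2 * (‖x i‖ ^ 2 + ‖y i‖ ^ 2)) := by gcongr; exacts [hc i, add_sq_le]
    _ = 2 * (c i * ‖x i‖ ^ 2 + c i * ‖y i‖ ^ 2) := by ring

theorem summable_mul_norm_smul_sq [NormedSpace ℝ E] {c : ι → ℝ} {x : ι → E} (t : ℝ)
    (hx : Summable fun i ↦ c i * ‖x i‖ ^ 2) : Summable fun i ↦ c i * ‖t • x i‖ ^ 2 :=
  (hx.mul_left (t ^ 2)).congr fun i ↦ by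
    rw [norm_smul, mul_pow, Real.norm_eq_abs, sq_abs]
    ring

theorem norm_smul_add_sq_le [NormedSpace ℝ E] {θ : ℝ} (hθ₀ : 0 ≤ θ) (hθ₁ : θ < 1) (x y : E) :
    ‖θ • x + y‖ ^ 2 ≤ θ * ‖x‖ ^ 2 + ‖y‖ ^ 2 / (1 - θ) := by
  have hpos : 0 < 1 - θ := sub_pos.2 hθ₁
  have htri : ‖θ • x + y‖ ≤ θ * ‖x‖ + ‖y‖ := by
    simpa only [norm_smul, Real.norm_of_nonneg hθ₀] using norm_add_le (θ • x) y
  have hgap : θ * ‖x‖ ^ 2 + ‖y‖ ^ 2 / (1 - θ) - (θ * ‖x‖ + ‖y‖) ^ 2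
      = θ / (1 - θ) * ((1 - θ) * ‖x‖ - ‖y‖) ^ 2 := by
    field_simp
    ring
  calc ‖θ • x + y‖ ^ 2 ≤ (θ * ‖x‖ + ‖y‖) ^ 2 := by gcongr
    _ ≤ θ * ‖x‖ ^ 2 + ‖y‖ ^ 2 / (1 - θ) := by
      rw [← sub_nonneg, hgap]
      positivity

end Norms

theorem summable_inner_of_summable_mul_of_summable_div {ι E : Type*} [SeminormedAddCommGroup E]
    [InnerProductSpace ℝ E] {c : ι → ℝ} {x y : ι → E} (hc : ∀ i, 0 < c i)
    (hx : Summable fun i ↦ c i * ‖x i‖ ^ 2) (hy : Summable fun i ↦ ‖y i‖ ^ 2 / c i) :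
    Summable fun i ↦ ⟪x i, y i⟫ := by
  refine .of_norm_bounded ((hx.add hy).div_const 2) fun i ↦ ?_
  have hci := hc i
  have hgap : (c i * ‖x i‖ ^ 2 + ‖y i‖ ^ 2 / c i) / 2 - ‖x i‖ * ‖y i‖
      = (c i * ‖x i‖ - ‖y i‖) ^ 2 / (2 * c i) := by
    field_simp
    ring
  have hyoung : 0 ≤ (c i * ‖x i‖ - ‖y i‖) ^ 2 / (2 * c i) := by positivity
  linarith [norm_inner_le_norm (𝕜 := ℝ) (x i) (y i)]

section SFBS

variable {H : Type*} [NormedAddCommGroup H] [InnerProductSpace ℝ H]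

/-- The set-valued operator `T` is `ρ`-comonotone: strongly comonotone (cocoercive) for `ρ > 0`,
monotone for `ρ = 0`, and possibly nonmonotone for `ρ < 0`. -/
def IsComonotone (ρ : ℝ) (T : H → Set H) : Prop :=
  ∀ ⦃x y a b : H⦄, a ∈ T x → b ∈ T y → ρ * ‖a - b‖ ^ 2 ≤ ⟪a - b, x - y⟫

/-- The ranges of the parameters for which the anchored scheme below has the fast rate. -/
structure AdmissibleParams (ρ s r D q : ℝ) : Prop where
  s_pos : 0 < s
  one_lt_r : 1 < r
  D_pos : 0 < D
  D_lt : D < (r - 1) * (s + 2 * ρ)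
  abs_q_lt_one : |q| < 1

/-- An inexact anchored extragradient scheme for the inclusion `0 ∈ T z`. Here `a k` is the
residual, an element of `T (z k)`, and `u k` is the moving anchor. The correction `d k` is known
to be `a (k + 1) - (k / (k + r)) • a k` only up to the relative error `q`. Nothing is assumed
about the starting data `z 0`, `u 0`, `a 0`. -/
structure IsAnchoredScheme (T : H → Set H) (ρ s r D q : ℝ) (z u a d : ℕ → H) : Prop where
  residual_mem (k : ℕ) : a (k + 1) ∈ T (z (k + 1))
  z_succ (k : ℕ) : z (k + 1) = ((k : ℝ) / (k + r)) • z k + (r / (k + r)) • u k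
    - ((k : ℝ) / (k + r) * (s + 2 * ρ)) • a k - s • d k
  u_succ (k : ℕ) : u (k + 1) = u k - (D / r) • a (k + 1)
  error_le (k : ℕ) : ‖d k - (a (k + 1) - ((k : ℝ) / (k + r)) • a k)‖ ≤ q * ‖d k‖

/-- The part of the Lyapunov function of the anchored scheme that involves no solution. -/
noncomputable def potential (ρ s r : ℝ) (z u a : ℕ → H) (k : ℕ) : ℝ :=
  r * k * ⟪a k, z k - u k⟫ + ((s + 2 * ρ) / 2 * k ^ 2 - ρ * r * k) * ‖a k‖ ^ 2

/-- The Lyapunov function of the anchored scheme relative to the solution `w`. The weight of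
`‖u k - w‖ ^ 2` is the one whose increments cancel the terms `⟪a (k + 1), u (k + 1) - w⟫`. -/
noncomputable def energy (ρ s r D : ℝ) (z u a : ℕ → H) (w : H) (k : ℕ) : ℝ :=
  potential ρ s r z u a k + r ^ 2 * (r - 1) / (2 * D) * ‖u k - w‖ ^ 2

/-- The forcing term in the recursion
`z (k + 1) - u (k + 1) = (k / (k + r)) • (z k - u k) + gapForcing ρ s r D a d k`. -/
noncomputable def gapForcing (ρ s r D : ℝ) (a d : ℕ → H) (k : ℕ) : H :=
  (D / r) • a (k + 1) - s • d k - (s + 2 * ρ) • ((k : ℝ) / (k + r)) • a k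

namespace AdmissibleParams

variable {ρ s r D q : ℝ} (hp : AdmissibleParams ρ s r D q)
include hp

theorem r_pos : 0 < r := zero_lt_one.trans hp.one_lt_r

theorem r_sub_one_pos : 0 < r - 1 := sub_pos.2 hp.one_lt_r

theorem s_add_two_mul_pos : 0 < s + 2 * ρ :=
  pos_of_mul_pos_right (hp.D_pos.trans hp.D_lt) hp.r_sub_one_pos.le

theorem slack_pos : 0 < (r - 1) * (s + 2 * ρ) - D := sub_pos.2 hp.D_lt

theorem correction_weight_pos : 0 < s / 2 * (1 - q ^ 2) :=
  mul_pos (half_pos hp.s_pos) (sub_pos.2 ((sq_lt_one_iff_abs_lt_one q).2 hp.abs_q_lt_one))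

theorem anchor_weight_pos : 0 < r ^ 2 * (r - 1) / (2 * D) := by
  have := hp.r_pos
  have := hp.r_sub_one_pos
  have := hp.D_pos
  positivity

end AdmissibleParams

theorem energy_eq {ρ s r D : ℝ} (hr : r ≠ 0) (hr₁ : r - 1 ≠ 0) (hD : D ≠ 0) (z u a : ℕ → H)
    (w : H) (k : ℕ) :
    energy ρ s r D z u a w k
      = r * (k * (⟪a k, z k - w⟫ - ρ * ‖a k‖ ^ 2))
        + ((r - 1) * (s + 2 * ρ) - D) / (2 * (r - 1)) * (k ^ 2 * ‖a k‖ ^ 2)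
        + r ^ 2 * (r - 1) / (2 * D) * ‖(D / (r * (r - 1)) * k) • a k - (u k - w)‖ ^ 2 := by
  rw [energy, potential, ← sub_add_sub_cancel (z k) (u k) w, inner_add_right,
    norm_sub_sq_real (_ • a k), real_inner_smul_left, norm_smul, mul_pow, Real.norm_eq_abs, sq_abs]
  field_simp
  ring

namespace IsAnchoredScheme

variable {T : H → Set H} {ρ s r D q : ℝ} {z u a d : ℕ → H} {w : H}

theorem mul_comonotone_gap_nonneg (h : IsAnchoredScheme T ρ s r D q z u a d)
    (hT : IsComonotone ρ T) (k : ℕ) :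
    0 ≤ (k : ℝ) * (⟪a (k + 1) - a k, z (k + 1) - z k⟫ - ρ * ‖a (k + 1) - a k‖ ^ 2) := by
  cases k with
  | zero => simp
  | succ k =>
    exact mul_nonneg (Nat.cast_nonneg _)
      (sub_nonneg.2 (hT (h.residual_mem (k + 1)) (h.residual_mem k)))

theorem mul_norm_sq_le_inner_sub (h : IsAnchoredScheme T ρ s r D q z u a d)
    (hT : IsComonotone ρ T) (hw : 0 ∈ T w) (k : ℕ) :
    ρ * ‖a (k + 1)‖ ^ 2 ≤ ⟪a (k + 1), z (k + 1) - w⟫ := by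
  simpa only [sub_zero] using hT (h.residual_mem k) hw

theorem gap_succ (h : IsAnchoredScheme T ρ s r D q z u a d) (hr : 0 < r) (k : ℕ) :
    z (k + 1) - u (k + 1)
      = ((k : ℝ) / (k + r)) • (z k - u k) + gapForcing ρ s r D a d k := by
  have hθ : r / (k + r) = 1 - (k : ℝ) / (k + r) := by
    field_simp
    ring
  rw [h.z_succ, h.u_succ, hθ, gapForcing]
  module

theorem step_eq (h : IsAnchoredScheme T ρ s r D q z u a d) (hr : 0 < r) (k : ℕ) :
    z (k + 1) - z k = -((r / (k + r)) • (z k - u k)) - s • d k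
      - ((k : ℝ) / (k + r) * (s + 2 * ρ)) • a k := by
  have hθ : (k : ℝ) / (k + r) = 1 - r / (k + r) := by
    field_simp
    ring
  rw [h.z_succ, hθ]
  module

theorem norm_gap_succ_sq_add_le (h : IsAnchoredScheme T ρ s r D q z u a d) (hr : 0 < r)
    (k : ℕ) :
    ‖z (k + 1) - u (k + 1)‖ ^ 2 + r / (k + r) * ‖z k - u k‖ ^ 2
      ≤ ‖z k - u k‖ ^ 2 + (k + r) * ‖gapForcing ρ s r D a d k‖ ^ 2 / r := by
  have hθ₁ : (k : ℝ) / (k + r) < 1 := (div_lt_one (by positivity)).2 (by linarith)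
  have hconvex := norm_smul_add_sq_le (by positivity) hθ₁ (z k - u k) (gapForcing ρ s r D a d k)
  have hcompl : 1 - (k : ℝ) / (k + r) = r / (k + r) := by
    field_simp
    ring
  rw [← h.gap_succ hr, hcompl, div_div_eq_mul_div, mul_comm (‖gapForcing ρ s r D a d k‖ ^ 2)]
    at hconvex
  linear_combination hconvex - ‖z k - u k‖ ^ 2 * hcompl

theorem potential_sub_potential_succ (h : IsAnchoredScheme T ρ s r D q z u a d) (hr : 0 < r)
    (k : ℕ) :
    potential ρ s r z u a k - potential ρ s r z u a (k + 1)
      = (k + r) * (k * (⟪a (k + 1) - a k, z (k + 1) - z k⟫ - ρ * ‖a (k + 1) - a k‖ ^ 2))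
        + s / 2 * (k + r) ^ 2
          * (‖d k‖ ^ 2 - ‖d k - (a (k + 1) - ((k : ℝ) / (k + r)) • a k)‖ ^ 2)
        + r * (r - 1) * (⟪a (k + 1), z (k + 1) - u (k + 1)⟫ - ρ * ‖a (k + 1)‖ ^ 2)
        + (((r - 1) * (s + 2 * ρ) - D) * (k + (r + 1) / 2) - (r - 1) * D / 2)
          * ‖a (k + 1)‖ ^ 2 := by
  rw [potential, potential, h.gap_succ hr, h.step_eq hr, gapForcing]
  simp only [← real_inner_self_eq_norm_sq, inner_add_right, inner_sub_left, inner_sub_right,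
    inner_neg_right, real_inner_smul_left, real_inner_smul_right]
  rw [real_inner_comm (a k) (a (k + 1)), real_inner_comm (d k) (a k),
    real_inner_comm (d k) (a (k + 1))]
  push_cast
  field_simp
  ring

theorem potential_succ_add_le (h : IsAnchoredScheme T ρ s r D q z u a d)
    (hp : AdmissibleParams ρ s r D q) (hT : IsComonotone ρ T) (k : ℕ) :
    potential ρ s r z u a (k + 1) + s / 2 * (1 - q ^ 2) * ((k + r) ^ 2 * ‖d k‖ ^ 2)
        + r * (r - 1) * (⟪a (k + 1), z (k + 1) - u (k + 1)⟫ - ρ * ‖a (k + 1)‖ ^ 2)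
        + (((r - 1) * (s + 2 * ρ) - D) * (k + 1) - (r - 1) * D / 2) * ‖a (k + 1)‖ ^ 2
      ≤ potential ρ s r z u a k := by
  have hs := hp.s_pos
  have hr := hp.r_pos
  have hcomonotone := mul_nonneg (add_pos_of_nonneg_of_pos k.cast_nonneg hr).le
    (h.mul_comonotone_gap_nonneg hT k)
  have herror : 0 ≤ s / 2 * (k + r) ^ 2 * ((q * ‖d k‖) ^ 2
      - ‖d k - (a (k + 1) - ((k : ℝ) / (k + r)) • a k)‖ ^ 2) := by
    have := sub_nonneg.2 (pow_le_pow_left₀ (norm_nonneg _) (h.error_le k) 2)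
    positivity
  have hhalf : 0 ≤ ((r - 1) * (s + 2 * ρ) - D) * ((r - 1) / 2) * ‖a (k + 1)‖ ^ 2 := by
    have := hp.slack_pos
    have := hp.r_sub_one_pos
    positivity
  linarith [h.potential_sub_potential_succ hr k]

section Convergence

variable (h : IsAnchoredScheme T ρ s r D q z u a d) (hp : AdmissibleParams ρ s r D q)
  (hT : IsComonotone ρ T) (hw : 0 ∈ T w)
include h hp hT hw

theorem energy_succ_add_le (k : ℕ) :
    energy ρ s r D z u a w (k + 1) + (s / 2 * (1 - q ^ 2) * ((k + r) ^ 2 * ‖d k‖ ^ 2)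
        + ((r - 1) * (s + 2 * ρ) - D) * ((k + 1) * ‖a (k + 1)‖ ^ 2))
      ≤ energy ρ s r D z u a w k := by
  have hr := hp.r_pos
  have hr₁ := hp.r_sub_one_pos
  have hD := hp.D_pos
  have hanchor : r ^ 2 * (r - 1) / (2 * D) * ‖u k - w‖ ^ 2
      = r ^ 2 * (r - 1) / (2 * D) * ‖u (k + 1) - w‖ ^ 2
        + r * (r - 1) * ⟪a (k + 1), u (k + 1) - w⟫ + (r - 1) * D / 2 * ‖a (k + 1)‖ ^ 2 := by
    have : u k - w = (u (k + 1) - w) + (D / r) • a (k + 1) := by rw [h.u_succ]; abel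
    rw [this, norm_add_sq_real, real_inner_smul_right, norm_smul, mul_pow, Real.norm_eq_abs,
      sq_abs, real_inner_comm]
    field_simp
  have hsol : 0 ≤ r * (r - 1) * (⟪a (k + 1), z (k + 1) - u (k + 1)⟫
      + ⟪a (k + 1), u (k + 1) - w⟫ - ρ * ‖a (k + 1)‖ ^ 2) := by
    rw [← inner_add_right, sub_add_sub_cancel]
    have := sub_nonneg.2 (h.mul_norm_sq_le_inner_sub hT hw k)
    positivity
  rw [energy, energy]
  linarith [h.potential_succ_add_le hp hT k]

theorem mul_sq_mul_norm_sq_le_energy (k : ℕ) :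
    ((r - 1) * (s + 2 * ρ) - D) / (2 * (r - 1)) * (k ^ 2 * ‖a k‖ ^ 2)
      ≤ energy ρ s r D z u a w k := by
  have hsol : 0 ≤ (k : ℝ) * (⟪a k, z k - w⟫ - ρ * ‖a k‖ ^ 2) := by
    cases k with
    | zero => simp
    | succ k =>
      exact mul_nonneg (Nat.cast_nonneg _) (sub_nonneg.2 (h.mul_norm_sq_le_inner_sub hT hw k))
  have hsquare := mul_nonneg hp.anchor_weight_pos.le
    (sq_nonneg ‖(D / (r * (r - 1)) * k) • a k - (u k - w)‖)
  rw [energy_eq hp.r_pos.ne' hp.r_sub_one_pos.ne' hp.D_pos.ne']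
  linarith [mul_nonneg hp.r_pos.le hsol]

theorem bddBelow_energy : BddBelow (Set.range (energy ρ s r D z u a w)) := by
  refine ⟨0, Set.forall_mem_range.2 fun k ↦ ?_⟩
  have := hp.slack_pos
  have := hp.r_sub_one_pos
  exact le_trans (by positivity) (h.mul_sq_mul_norm_sq_le_energy hp hT hw k)

theorem exists_tendsto_energy : ∃ l, Tendsto (energy ρ s r D z u a w) atTop (𝓝 l) := by
  refine exists_tendsto_of_succ_le_add_summable (h.bddBelow_energy hp hT hw) summable_zero
    fun k ↦ ?_
  have := hp.correction_weight_pos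
  have := hp.slack_pos
  rw [add_zero]
  exact le_of_add_le_of_nonneg_left (h.energy_succ_add_le hp hT hw k) (by positivity)

theorem summable_sq_mul_norm_correction_sq : Summable fun k : ℕ ↦ (k + r) ^ 2 * ‖d k‖ ^ 2 := by
  have hκ := hp.correction_weight_pos
  refine (summable_mul_left_iff hκ.ne').1 <| summable_of_succ_add_le_add_summable
    (h.bddBelow_energy hp hT hw) (fun k ↦ by positivity) summable_zero fun k ↦ ?_
  have : 0 ≤ ((r - 1) * (s + 2 * ρ) - D) * ((k + 1) * ‖a (k + 1)‖ ^ 2) := by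
    have := hp.slack_pos
    positivity
  linarith [h.energy_succ_add_le hp hT hw k]

theorem summable_mul_norm_residual_succ_sq :
    Summable fun k : ℕ ↦ ((k : ℝ) + 1) * ‖a (k + 1)‖ ^ 2 := by
  have hδ := hp.slack_pos
  refine (summable_mul_left_iff hδ.ne').1 <| summable_of_succ_add_le_add_summable
    (h.bddBelow_energy hp hT hw) (fun k ↦ by positivity) summable_zero fun k ↦ ?_
  have : 0 ≤ s / 2 * (1 - q ^ 2) * ((k + r) ^ 2 * ‖d k‖ ^ 2) := by
    have := hp.correction_weight_pos
    positivity
  linarith [h.energy_succ_add_le hp hT hw k]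

theorem summable_mul_norm_residual_sq : Summable fun k : ℕ ↦ (k : ℝ) * ‖a k‖ ^ 2 := by
  rw [← summable_nat_add_iff 1]
  exact_mod_cast h.summable_mul_norm_residual_succ_sq hp hT hw

theorem summable_mul_norm_gapForcing_sq :
    Summable fun k : ℕ ↦ (k + r) * ‖gapForcing ρ s r D a d k‖ ^ 2 := by
  have hr := hp.r_pos
  have hr₁ := hp.one_lt_r
  have hpos (k : ℕ) : 0 ≤ (k : ℝ) + r := by positivity
  have hnext : Summable fun k : ℕ ↦ (k + r) * ‖a (k + 1)‖ ^ 2 := by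
    refine .of_nonneg_of_le (fun k ↦ by positivity) (fun k ↦ ?_)
      ((h.summable_mul_norm_residual_succ_sq hp hT hw).mul_left r)
    rw [← mul_assoc]
    gcongr
    nlinarith [k.cast_nonneg (α := ℝ)]
  have hcorrection : Summable fun k : ℕ ↦ (k + r) * ‖d k‖ ^ 2 := by
    refine .of_nonneg_of_le (fun k ↦ by positivity) (fun k ↦ ?_)
      (h.summable_sq_mul_norm_correction_sq hp hT hw)
    gcongr
    exact le_self_pow₀ (by linarith [k.cast_nonneg (α := ℝ)]) two_ne_zero
  have hcurrent : Summable fun k : ℕ ↦ (k + r) * ‖((k : ℝ) / (k + r)) • a k‖ ^ 2 := by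
    refine .of_nonneg_of_le (fun k ↦ by positivity) (fun k ↦ ?_)
      (h.summable_mul_norm_residual_sq hp hT hw)
    have hθ : (k : ℝ) / (k + r) ≤ 1 := div_le_one_of_le₀ (by linarith) (hpos k)
    calc (k + r) * ‖((k : ℝ) / (k + r)) • a k‖ ^ 2
        = (k : ℝ) / (k + r) * (k * ‖a k‖ ^ 2) := by
          rw [norm_smul, Real.norm_of_nonneg (by positivity)]
          field_simp
      _ ≤ k * ‖a k‖ ^ 2 := mul_le_of_le_one_left (by positivity) hθ
  exact summable_mul_norm_sub_sq hpos (summable_mul_norm_sub_sq hpos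
    (summable_mul_norm_smul_sq _ hnext) (summable_mul_norm_smul_sq _ hcorrection))
    (summable_mul_norm_smul_sq _ hcurrent)

theorem summable_norm_gap_sq_div : Summable fun k : ℕ ↦ ‖z k - u k‖ ^ 2 / k := by
  have hr := hp.r_pos
  have hsum : Summable fun k : ℕ ↦ r / (k + r) * ‖z k - u k‖ ^ 2 :=
    summable_of_succ_add_le_add_summable ⟨0, Set.forall_mem_range.2 fun k ↦ sq_nonneg ‖z k - u k‖⟩
      (fun k ↦ by positivity) ((h.summable_mul_norm_gapForcing_sq hp hT hw).div_const r)
      (h.norm_gap_succ_sq_add_le hr)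
  refine .of_norm_bounded_eventually_nat (hsum.mul_left ((1 + r) / r)) ?_
  filter_upwards [eventually_ge_atTop 1] with k hk
  have hk₁ : (1 : ℝ) ≤ k := by exact_mod_cast hk
  rw [Real.norm_of_nonneg (by positivity)]
  calc ‖z k - u k‖ ^ 2 / k ≤ ‖z k - u k‖ ^ 2 / ((k + r) / (1 + r)) := by
        gcongr
        rw [div_le_iff₀ (by positivity)]
        nlinarith
    _ = (1 + r) / r * (r / (k + r) * ‖z k - u k‖ ^ 2) := by field_simp

theorem tendsto_gap_zero : Tendsto (fun k ↦ z k - u k) atTop (𝓝 0) := by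
  obtain ⟨l, hl⟩ : ∃ l, Tendsto (fun k ↦ ‖z k - u k‖ ^ 2) atTop (𝓝 l) := by
    refine exists_tendsto_of_succ_le_add_summable
      ⟨0, Set.forall_mem_range.2 fun k ↦ sq_nonneg ‖z k - u k‖⟩
      ((h.summable_mul_norm_gapForcing_sq hp hT hw).div_const r) fun k ↦ ?_
    have := hp.r_pos
    exact le_of_add_le_of_nonneg_left (h.norm_gap_succ_sq_add_le hp.r_pos k) (by positivity)
  obtain rfl := eq_zero_of_tendsto_of_summable_div_natCast hl
    (h.summable_norm_gap_sq_div hp hT hw)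
  exact tendsto_zero_of_tendsto_norm_sq hl

theorem isBoundedUnder_norm_smul_residual :
    IsBoundedUnder (· ≤ ·) atTop fun k : ℕ ↦ ‖(k : ℝ) • a k‖ := by
  obtain ⟨l, hl⟩ := h.exists_tendsto_energy hp hT hw
  obtain ⟨B, hB⟩ := hl.bddAbove_range
  have hε : 0 < ((r - 1) * (s + 2 * ρ) - D) / (2 * (r - 1)) :=
    div_pos hp.slack_pos (mul_pos two_pos hp.r_sub_one_pos)
  refine isBoundedUnder_of ⟨√(B / (((r - 1) * (s + 2 * ρ) - D) / (2 * (r - 1)))), fun k ↦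
    Real.le_sqrt_of_sq_le ?_⟩
  rw [le_div_iff₀' hε, norm_smul, mul_pow, Real.norm_natCast]
  exact (h.mul_sq_mul_norm_sq_le_energy hp hT hw k).trans (hB ⟨k, rfl⟩)

theorem tendsto_potential_sub_sq_mul_norm_sq :
    Tendsto (fun k : ℕ ↦ potential ρ s r z u a k - (s + 2 * ρ) / 2 * ‖(k : ℝ) • a k‖ ^ 2)
      atTop (𝓝 0) := by
  have hinner : Tendsto (fun k : ℕ ↦ ⟪(k : ℝ) • a k, z k - u k⟫) atTop (𝓝 0) := by
    refine squeeze_zero_norm (fun k ↦ norm_inner_le_norm _ _) ?_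
    exact isBoundedUnder_le_mul_tendsto_zero
      (by simpa only [Function.comp_def, norm_norm] using
        h.isBoundedUnder_norm_smul_residual hp hT hw)
      (tendsto_zero_iff_norm_tendsto_zero.1 (h.tendsto_gap_zero hp hT hw))
  have hresidual := (h.summable_mul_norm_residual_sq hp hT hw).tendsto_atTop_zero
  have hrest := (hinner.const_mul r).sub (hresidual.const_mul (ρ * r))
  rw [mul_zero, mul_zero, sub_zero] at hrest
  refine hrest.congr fun k ↦ ?_
  rw [potential, real_inner_smul_left, norm_smul, mul_pow, Real.norm_natCast]
  ring

theorem exists_tendsto_potential : ∃ l, Tendsto (potential ρ s r z u a) atTop (𝓝 l) := by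
  have hσ := hp.s_add_two_mul_pos
  have hbdd : BddBelow (Set.range (potential ρ s r z u a)) := by
    obtain ⟨B, hB⟩ := (h.tendsto_potential_sub_sq_mul_norm_sq hp hT hw).bddBelow_range
    exact ⟨B, Set.forall_mem_range.2 fun k ↦
      (hB ⟨k, rfl⟩).trans (sub_le_self _ (by positivity))⟩
  have hinner : Summable fun k ↦ ⟪a (k + 1), z (k + 1) - u (k + 1)⟫ :=
    summable_inner_of_summable_mul_of_summable_div (c := fun k : ℕ ↦ (k : ℝ) + 1)
      (fun k ↦ by positivity) (h.summable_mul_norm_residual_succ_sq hp hT hw)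
      (by exact_mod_cast (summable_nat_add_iff 1).2 (h.summable_norm_gap_sq_div hp hT hw))
  have hresidual : Summable fun k ↦ ‖a (k + 1)‖ ^ 2 :=
    .of_nonneg_of_le (fun k ↦ sq_nonneg _)
      (fun k ↦ le_mul_of_one_le_left (sq_nonneg _) (by simp))
      (h.summable_mul_norm_residual_succ_sq hp hT hw)
  refine exists_tendsto_of_succ_le_add_summable hbdd
    ((hresidual.mul_left (r * (r - 1) * ρ + (r - 1) * D / 2)).sub
      (hinner.mul_left (r * (r - 1)))) fun k ↦ ?_
  have hdrop : 0 ≤ s / 2 * (1 - q ^ 2) * ((k + r) ^ 2 * ‖d k‖ ^ 2)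
      + ((r - 1) * (s + 2 * ρ) - D) * (k + 1) * ‖a (k + 1)‖ ^ 2 := by
    have := hp.correction_weight_pos
    have := hp.slack_pos
    positivity
  linarith [h.potential_succ_add_le hp hT k]

theorem tendsto_smul_residual_zero : Tendsto (fun k : ℕ ↦ (k : ℝ) • a k) atTop (𝓝 0) := by
  have hσ := hp.s_add_two_mul_pos
  obtain ⟨l, hl⟩ := h.exists_tendsto_potential hp hT hw
  have hlim : Tendsto (fun k : ℕ ↦ ‖(k : ℝ) • a k‖ ^ 2) atTop (𝓝 (2 / (s + 2 * ρ) * (l - 0))) := by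
    refine ((hl.sub (h.tendsto_potential_sub_sq_mul_norm_sq hp hT hw)).const_mul _).congr
      fun k ↦ ?_
    field_simp
    ring
  have hsum : Summable fun k : ℕ ↦ ‖(k : ℝ) • a k‖ ^ 2 / k := by
    refine (h.summable_mul_norm_residual_sq hp hT hw).congr fun k ↦ ?_
    rw [norm_smul, mul_pow, Real.norm_natCast, mul_div_right_comm, sq (k : ℝ),
      mul_self_div_self]
  rw [eq_zero_of_tendsto_of_summable_div_natCast hlim hsum] at hlim
  exact tendsto_zero_of_tendsto_norm_sq hlim

theorem tendsto_potential_zero : Tendsto (potential ρ s r z u a) atTop (𝓝 0) := by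
  simpa using (h.tendsto_potential_sub_sq_mul_norm_sq hp hT hw).add
    (((h.tendsto_smul_residual_zero hp hT hw).norm.pow 2).const_mul ((s + 2 * ρ) / 2))

theorem exists_tendsto_norm_anchor_sub_sq : ∃ l, Tendsto (fun k ↦ ‖u k - w‖ ^ 2) atTop (𝓝 l) := by
  obtain ⟨l, hl⟩ := h.exists_tendsto_energy hp hT hw
  refine ⟨_, ((hl.sub (h.tendsto_potential_zero hp hT hw)).div_const
    (r ^ 2 * (r - 1) / (2 * D))).congr fun k ↦ ?_⟩
  rw [energy, add_sub_cancel_left, mul_div_cancel_left₀ _ hp.anchor_weight_pos.ne']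

theorem tendsto_smul_step_zero : Tendsto (fun k : ℕ ↦ (k : ℝ) • (z (k + 1) - z k)) atTop (𝓝 0) := by
  have hr := hp.r_pos
  have hcorrection : Tendsto (fun k : ℕ ↦ ((k : ℝ) + r) • d k) atTop (𝓝 0) := by
    refine tendsto_zero_of_tendsto_norm_sq
      ((h.summable_sq_mul_norm_correction_sq hp hT hw).tendsto_atTop_zero.congr fun k ↦ ?_)
    rw [norm_smul, mul_pow, Real.norm_eq_abs, sq_abs]
  have hlim := (tendsto_natCast_div_add_atTop r).smul
    ((((h.tendsto_gap_zero hp hT hw).const_smul r).add (hcorrection.const_smul s)).add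
      ((h.tendsto_smul_residual_zero hp hT hw).const_smul (s + 2 * ρ))).neg
  simp only [smul_zero, add_zero, neg_zero] at hlim
  refine hlim.congr fun k ↦ ?_
  rw [h.step_eq hr]
  match_scalars <;> field_simp

end Convergence

end IsAnchoredScheme

/-- The step-size-`s` SFBS recursion: `zh k` is the half step `z_{k+1/2}`, `zt` the anchored point
`z̃` and `Gt k` the selected element `G̃_k` of `G (z k)`. The starting data `z 0`, `u 0`, `Gt 0`
are unconstrained. -/
structure IsSFBS (F : H → H) (G : H → Set H) (ρ s r D : ℝ) (z zh zt u Gt : ℕ → H) : Prop where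
  zt_succ (k : ℕ) : zt (k + 1) = ((k : ℝ) / (k + r)) • z k + (r / (k + r)) • u k
  zh_eq (k : ℕ) : zh k = zt (k + 1) - ((k : ℝ) / (k + r) * (s + 2 * ρ)) • (F (z k) + Gt k)
  z_succ (k : ℕ) : z (k + 1) = zt (k + 1) - s • (F (zh k) + Gt (k + 1))
    - ((2 * ρ * k) / (k + r)) • (F (z k) + Gt k)
  Gt_succ_mem (k : ℕ) : Gt (k + 1) ∈ G (z (k + 1))
  u_succ (k : ℕ) : u (k + 1) = u k - (D / r) • (F (z (k + 1)) + Gt (k + 1))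

theorem IsSFBS.isAnchoredScheme {F : H → H} {G : H → Set H} {L ρ s r D : ℝ}
    {z zh zt u Gt : ℕ → H} (h : IsSFBS F G ρ s r D z zh zt u Gt)
    (hLip : ∀ x y, ‖F x - F y‖ ≤ L * ‖x - y‖) (hs : 0 ≤ s) :
    IsAnchoredScheme (fun x ↦ (F x + ·) '' G x) ρ s r D (s * L) z u (fun k ↦ F (z k) + Gt k)
      (fun k ↦ F (zh k) + Gt (k + 1) - ((k : ℝ) / (k + r)) • (F (z k) + Gt k)) where
  residual_mem k := ⟨_, h.Gt_succ_mem k, rfl⟩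
  z_succ k := by
    rw [h.z_succ, h.zt_succ]
    module
  u_succ := h.u_succ
  error_le k := by
    have hstep : zh k - z (k + 1)
        = s • (F (zh k) + Gt (k + 1) - ((k : ℝ) / (k + r)) • (F (z k) + Gt k)) := by
      rw [h.z_succ, h.zh_eq]
      module
    have hLipStep := hLip (zh k) (z (k + 1))
    rw [hstep, norm_smul, Real.norm_of_nonneg hs, ← mul_assoc, mul_comm L] at hLipStep
    rwa [sub_sub_sub_cancel_right, add_sub_add_right_eq_sub]

theorem sfbs_faster_rate_general (L ρ s r D : ℝ) (F : H → H) (G : H → Set H)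
    (z zh zt u Gt : ℕ → H)
    (hLip : ∀ x y : H, ‖F x - F y‖ ≤ L * ‖x - y‖)
    (hcomono : ∀ x y g h : H, g ∈ G x → h ∈ G y →
      ρ * ‖(F x + g) - (F y + h)‖ ^ 2 ≤ ⟪(F x + g) - (F y + h), x - y⟫)
    (hsol : ∃ w : H, -F w ∈ G w)
    (hL : 0 ≤ L) (hs : 0 < s) (hsL : s * L < 1) (hr : 1 < r)
    (hD₀ : 0 < D) (hD : D < (r - 1) * (s + 2 * ρ))
    (h : IsSFBS F G ρ s r D z zh zt u Gt) :
    Tendsto (fun k : ℕ ↦ ‖z k - u k‖ ^ 2) atTop (𝓝 0) ∧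
    (∀ zs : H, -F zs ∈ G zs → ∃ l : ℝ, Tendsto (fun k : ℕ ↦ ‖u k - zs‖ ^ 2) atTop (𝓝 l)) ∧
    Tendsto (fun k : ℕ ↦ (k : ℝ) ^ 2 * ‖F (z k) + Gt k‖ ^ 2) atTop (𝓝 0) ∧
    Tendsto (fun k : ℕ ↦ (k : ℝ) ^ 2 * ‖z (k + 1) - z k‖ ^ 2) atTop (𝓝 0) := by
  have hp : AdmissibleParams ρ s r D (s * L) :=
    ⟨hs, hr, hD₀, hD, by rwa [abs_of_nonneg (mul_nonneg hs.le hL)]⟩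
  have hT : IsComonotone ρ fun x ↦ (F x + ·) '' G x := by
    rintro x y _ _ ⟨g, hg, rfl⟩ ⟨g', hg', rfl⟩
    exact hcomono x y g g' hg hg'
  have zero_mem {w : H} (hw : -F w ∈ G w) : (0 : H) ∈ (F w + ·) '' G w :=
    ⟨-F w, hw, add_neg_cancel _⟩
  have hA := h.isAnchoredScheme hLip hs.le
  obtain ⟨w, hw⟩ := hsol
  refine ⟨?_, fun zs hzs ↦ hA.exists_tendsto_norm_anchor_sub_sq hp hT (zero_mem hzs), ?_, ?_⟩
  · simpa using (hA.tendsto_gap_zero hp hT (zero_mem hw)).norm.pow 2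
  · simpa only [norm_smul, mul_pow, Real.norm_natCast, norm_zero, zero_pow two_ne_zero] using
      (hA.tendsto_smul_residual_zero hp hT (zero_mem hw)).norm.pow 2
  · simpa only [norm_smul, mul_pow, Real.norm_natCast, norm_zero, zero_pow two_ne_zero] using
      (hA.tendsto_smul_step_zero hp hT (zero_mem hw)).norm.pow 2

end SFBS

/-- Faster `o(1/k²)` convergence rate of the step-size-`s` SFBS method. -/
theorem sfbs_faster_rate
    {H : Type*} [NormedAddCommGroup H] [InnerProductSpace ℝ H] [CompleteSpace H]
    (L ρ s r D : ℝ) (F : H → H) (G : H → Set H)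
    (z zh zt u Gt : ℕ → H)
    (hL : 0 < L) (hρ : -1/(2*L) < ρ)
    (hLip : ∀ x y : H, ‖F x - F y‖ ≤ L * ‖x - y‖)
    (hcomono : ∀ x y g h : H, g ∈ G x → h ∈ G y →
      ρ * ‖(F x + g) - (F y + h)‖^2 ≤ ⟪(F x + g) - (F y + h), x - y⟫)
    (hsol : ∃ w : H, -F w ∈ G w)
    (hs0 : max 0 (-2*ρ) < s) (hs1 : s < 1/L)
    (hr : 1 < r) (hD0 : 0 < D) (hD : D < (r - 1) * (s + 2*ρ))
    (hu0 : u 0 = z 0) (hG0 : Gt 0 ∈ G (z 0))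
    (hzt : ∀ k : ℕ, zt (k+1) = ((k : ℝ)/((k : ℝ) + r)) • z k + (r/((k : ℝ) + r)) • u k)
    (hzh : ∀ k : ℕ, zh k =
      zt (k+1) - ((k : ℝ)/((k : ℝ) + r) * (s + 2*ρ)) • (F (z k) + Gt k))
    (hz : ∀ k : ℕ, z (k+1) = zt (k+1) - s • (F (zh k) + Gt (k+1))
        - ((2*ρ*(k : ℝ))/((k : ℝ) + r)) • (F (z k) + Gt k))
    (hGt : ∀ k : ℕ, Gt (k+1) ∈ G (z (k+1)))
    (hu : ∀ k : ℕ, u (k+1) = u k - (D/r) • (F (z (k+1)) + Gt (k+1))) :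
    Tendsto (fun k : ℕ => ‖z k - u k‖^2) atTop (nhds 0) ∧
    (∀ zs : H, -F zs ∈ G zs →
      ∃ l : ℝ, Tendsto (fun k : ℕ => ‖u k - zs‖^2) atTop (nhds l)) ∧
    Tendsto (fun k : ℕ => (k : ℝ)^2 * ‖F (z k) + Gt k‖^2) atTop (nhds 0) ∧
    Tendsto (fun k : ℕ => (k : ℝ)^2 * ‖z (k+1) - z k‖^2) atTop (nhds 0) := by
  exact sfbs_faster_rate_general L ρ s r D F G z zh zt u Gt hLip hcomono hsol hL.le
    ((le_max_left _ _).trans_lt hs0) ((lt_div_iff₀ hL).1 hs1) hr hD0 hD ⟨hzt, hzh, hz, hGt, hu⟩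
end

section
/- Under the step-size-s SPEG+ iteration with F L-Lipschitz and monotone, 0 < s < 1/L, r > 1 and 0 < D < (r−1)s, the following hold: (i) lim_{k→∞} ‖z_k − u_k‖² = 0; (ii) for every solution z*, lim_{k→∞} ‖u_k − z*‖² exists; (iii) lim_{k→∞} k²·‖F(z_k) + C̃_k‖² = 0; (iv) for every solution z*, lim_{k→∞} k·⟨F(z_k) + C̃_k, z_k − z*⟩ = 0; (v) lim_{k→∞} k²·‖z_{k+1} − z_k‖² = 0. Moreover, (z_k) and (u_k) both converge weakly to a common solution. -/
open RealInnerProductSpace Filter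

/-!
Write `G_k = F (z_k) + C̃_k`, where `C̃_k` is a normal vector of `C` at `z_k`. For every solution
`w`, monotonicity and `s * L < 1` make the energy
`2rk⟪G_k, z_k - u_k⟫ + sk²‖G_k‖² + (r²(r - 1)/D)‖u_k - w‖²`
decrease, by at least a constant times `(k + r)²‖z_{k+1} - z_{k+1/2}‖² + (k + 1 + r)‖G_{k+1}‖²`.
Hence these terms are summable, and the energy, being bounded below by a multiple of `k²‖G_k‖²`,
converges.

The difference `z_{k+1} - u_{k+1}` is a convex combination, with weights `k/(k + r)` and
`r/(k + r)`, of `z_k - u_k` and a perturbation whose squares are summable against `1/(k + r)`.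
So `‖z_k - u_k‖²` converges and is itself summable against `1/(k + r)`; the divergence of the
harmonic series forces its limit to be `0`. By AM-GM, `⟪G_k, z_k - u_k⟫` is then summable, so that
`u` is quasi-Fejér monotone with respect to the solutions. Now all terms of the energy converge,
and `∑ k‖G_k‖² < ∞` forces `k²‖G_k‖² → 0`. Weak convergence follows from Opial's lemma, weak cluster
points being solutions by Minty's lemma.
-/

open scoped Topology NNReal

namespace SPEGPlus

section RealSequences

theorem summable_and_exists_tendsto_of_succ_add_le {V x y : ℕ → ℝ}
    (hV : BddBelow (Set.range V)) (hx : ∀ k, 0 ≤ x k) (hy : Summable y)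
    (h : ∀ k, V (k + 1) + x k ≤ V k + y k) :
    Summable x ∧ ∃ l, Tendsto V atTop (𝓝 l) := by
  obtain ⟨m, hm⟩ := hV
  obtain ⟨B, hB⟩ := hy.hasSum.tendsto_sum_nat.bddAbove_range
  have hVm (n : ℕ) : m ≤ V n := hm ⟨n, rfl⟩
  have hyB (n : ℕ) : ∑ i ∈ Finset.range n, y i ≤ B := hB ⟨n, rfl⟩
  let W : ℕ → ℝ := fun n => V n + ∑ i ∈ Finset.range n, x i - ∑ i ∈ Finset.range n, y i
  have hW : Antitone W := antitone_nat_of_succ_le fun n => by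
    simp only [W, Finset.sum_range_succ]
    linarith [h n]
  have hx_sum : Summable x := by
    refine summable_of_sum_range_le (c := V 0 + B - m) hx fun n => ?_
    have hWn : W n ≤ V 0 := by simpa [W] using hW (Nat.zero_le n)
    dsimp only [W] at hWn
    linarith [hVm n, hyB n]
  have hW_bdd : BddBelow (Set.range W) := by
    refine ⟨m - B, ?_⟩
    rintro _ ⟨n, rfl⟩
    dsimp only [W]
    linarith [hVm n, hyB n, Finset.sum_nonneg fun i (_ : i ∈ Finset.range n) => hx i]
  refine ⟨hx_sum, _, (((tendsto_atTop_ciInf hW hW_bdd).sub hx_sum.hasSum.tendsto_sum_nat).add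
    hy.hasSum.tendsto_sum_nat).congr fun n => ?_⟩
  simp only [W]
  ring

theorem eq_zero_of_tendsto_of_summable_mul {w A : ℕ → ℝ} {l : ℝ} (hw : ¬ Summable w)
    (hA : Tendsto A atTop (𝓝 l)) (hwA : Summable fun k => w k * A k) : l = 0 := by
  by_contra hl
  refine hw (summable_of_isBigO_nat hwA ?_)
  have hquot : (fun k => w k * A k * (A k)⁻¹) =ᶠ[atTop] w := by
    filter_upwards [hA.eventually_ne hl] with k hk
    exact mul_inv_cancel_right₀ hk _
  simpa using ((Asymptotics.isBigO_refl _ _).mul ((hA.inv₀ hl).isBigO_one ℝ)).congr'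
    hquot .rfl

theorem not_summable_one_div_natCast_add (r : ℝ) :
    ¬ Summable fun k : ℕ => 1 / ((k : ℝ) + r) := by
  rw [← summable_abs_iff]
  simpa [abs_inv] using (Real.summable_one_div_nat_add_rpow r 1).not.2 (lt_irrefl 1)

end RealSequences

section WeakConvergence

variable {ι E : Type*} [NormedAddCommGroup E] [InnerProductSpace ℝ E] {l : Filter ι}

/-- Weak convergence of `x` to `w` along `l` in an inner product space, tested against vectors
through the inner product rather than against arbitrary continuous functionals. -/
def WeaklyTendsto (x : ι → E) (l : Filter ι) (w : E) : Prop :=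
  ∀ y : E, Tendsto (fun i => ⟪x i, y⟫) l (𝓝 ⟪w, y⟫)

theorem WeaklyTendsto.of_tendsto_sub {x y : ι → E} {w : E} (hx : WeaklyTendsto x l w)
    (hyx : Tendsto (fun i => y i - x i) l (𝓝 0)) : WeaklyTendsto y l w := fun v => by
  simpa [← inner_add_left] using (hyx.inner (tendsto_const_nhds (x := v))).add (hx v)

theorem WeaklyTendsto.mem_of_isComplete_of_convex [l.NeBot] {x : ι → E} {w : E} {C : Set E}
    (hw : WeaklyTendsto x l w) (hC : IsComplete C) (hconv : Convex ℝ C) (hx : ∀ i, x i ∈ C) :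
    w ∈ C := by
  obtain ⟨i⟩ := l.nonempty_of_neBot
  obtain ⟨p, hp, hmin⟩ := exists_norm_eq_iInf_of_complete_convex ⟨x i, hx i⟩ hC hconv w
  have hproj := (norm_eq_iInf_iff_real_inner_le_zero hconv hp).1 hmin
  have hlim : Tendsto (fun i => ⟪w - p, x i - p⟫) l (𝓝 ⟪w - p, w - p⟫) := by
    simpa only [inner_sub_right, real_inner_comm (w - p)] using (hw (w - p)).sub_const ⟪p, w - p⟫
  have hwp : w - p = 0 := real_inner_self_nonpos.1 (le_of_tendsto' hlim fun i => hproj _ (hx i))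
  rwa [sub_eq_zero.1 hwp]

/-- Banach–Alaoglu, transported to the Hilbert space by Riesz representation. -/
theorem exists_weaklyTendsto_of_ultrafilter [CompleteSpace E] {U : Ultrafilter ι} {x : ι → E}
    (hx : IsBoundedUnder (· ≤ ·) (U : Filter ι) fun i => ‖x i‖) :
    ∃ w, WeaklyTendsto x U w := by
  obtain ⟨R, hR⟩ := hx
  let f : ι → WeakDual ℝ E := fun i => StrongDual.toWeakDual (InnerProductSpace.toDual ℝ E (x i))
  obtain ⟨φ, -, hφ⟩ := (WeakDual.isCompact_closedBall (𝕜 := ℝ) (E := E) 0 R).ultrafilter_le_nhds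
    (U.map f) (le_principal_iff.2 <| (eventually_map.1 hR).mono fun i hi => by
      simpa [f] using hi)
  refine ⟨(InnerProductSpace.toDual ℝ E).symm (WeakDual.toStrongDual φ), fun y => ?_⟩
  rw [InnerProductSpace.toDual_symm_apply]
  exact ((WeakDual.eval_continuous (𝕜 := ℝ) y).tendsto φ).comp hφ

theorem exists_tendsto_inner_sub {x : ι → E} {v w : E} {a b : ℝ}
    (hv : Tendsto (fun i => ‖x i - v‖) l (𝓝 a)) (hw : Tendsto (fun i => ‖x i - w‖) l (𝓝 b)) :
    ∃ c, Tendsto (fun i => ⟪x i, v - w⟫) l (𝓝 c) := by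
  refine ⟨_, ((((hw.pow 2).sub (hv.pow 2)).add_const (‖v‖ ^ 2 - ‖w‖ ^ 2)).div_const 2).congr
    fun i => ?_⟩
  rw [norm_sub_sq_real, norm_sub_sq_real, inner_sub_right]
  ring

/-- Opial's lemma. -/
theorem exists_mem_weaklyTendsto_of_tendsto_norm_sub [CompleteSpace E] [l.NeBot] {x : ι → E}
    {S : Set E} (hS : S.Nonempty) (hnorm : ∀ w ∈ S, ∃ a, Tendsto (fun i => ‖x i - w‖) l (𝓝 a))
    (hcluster : ∀ (U : Ultrafilter ι) (w : E), ↑U ≤ l → WeaklyTendsto x U w → w ∈ S) :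
    ∃ w ∈ S, WeaklyTendsto x l w := by
  obtain ⟨p, hp⟩ := hS
  obtain ⟨a, ha⟩ := hnorm p hp
  have hbdd : IsBoundedUnder (· ≤ ·) l fun i => ‖x i‖ :=
    (ha.add_const ‖p‖).isBoundedUnder_le.mono_le <| .of_forall fun i => by
      simpa using norm_add_le (x i - p) p
  have hlimit (U : Ultrafilter ι) (hU : ↑U ≤ l) : ∃ w ∈ S, WeaklyTendsto x U w := by
    obtain ⟨w, hw⟩ := exists_weaklyTendsto_of_ultrafilter (hbdd.mono hU)
    exact ⟨w, hcluster U w hU hw, hw⟩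
  obtain ⟨w, hwS, hw⟩ := hlimit (.of l) (Ultrafilter.of_le l)
  refine ⟨w, hwS, fun y => tendsto_iff_ultrafilter _ _ _ |>.2 fun U hU => ?_⟩
  obtain ⟨w', hwS', hw'⟩ := hlimit U hU
  suffices hww' : w' - w = 0 by simpa only [sub_eq_zero.1 hww'] using hw' y
  obtain ⟨b, hb⟩ := hnorm w hwS
  obtain ⟨b', hb'⟩ := hnorm w' hwS'
  obtain ⟨c, hc⟩ := exists_tendsto_inner_sub hb' hb
  have hwc : ⟪w, w' - w⟫ = c :=
    tendsto_nhds_unique (hw _) (hc.mono_left (Ultrafilter.of_le l))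
  have hwc' : ⟪w', w' - w⟫ = c := tendsto_nhds_unique (hw' _) (hc.mono_left hU)
  rw [← inner_self_eq_zero (𝕜 := ℝ), inner_sub_left, hwc, hwc', sub_self]

end WeakConvergence

section VariationalInequality

variable {ι E : Type*} [NormedAddCommGroup E] [InnerProductSpace ℝ E] {F : E → E} {C : Set E}
  {w : E}

/-- Monotonicity of the operator `F` on `C`, in the sense of monotone operator theory. -/
def InnerMonotoneOn (F : E → E) (C : Set E) : Prop :=
  ∀ x ∈ C, ∀ y ∈ C, 0 ≤ ⟪F x - F y, x - y⟫

/-- `w` solves the (Stampacchia) variational inequality of `F` over `C`. -/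
def IsVISolution (F : E → E) (C : Set E) (w : E) : Prop :=
  w ∈ C ∧ ∀ v ∈ C, 0 ≤ ⟪F w, v - w⟫

/-- Minty's lemma: test with `w + t • (v - w)` and let `t` decrease to `0`. -/
theorem IsVISolution.of_minty (hC : Convex ℝ C) (hF : ContinuousOn F C) (hw : w ∈ C)
    (hminty : ∀ v ∈ C, 0 ≤ ⟪F v, v - w⟫) : IsVISolution F C w := by
  refine ⟨hw, fun v hv => ?_⟩
  have hmem : ∀ t ∈ Set.Icc (0 : ℝ) 1, w + t • (v - w) ∈ C := fun t ht =>
    hC.add_smul_sub_mem hw hv ht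
  have hcont : ContinuousOn (fun t : ℝ => ⟪F (w + t • (v - w)), v - w⟫) (Set.Icc 0 1) :=
    (hF.comp (by fun_prop) hmem).inner continuousOn_const
  have hlim : Tendsto (fun t : ℝ => ⟪F (w + t • (v - w)), v - w⟫) (𝓝[>] 0) (𝓝 ⟪F w, v - w⟫) := by
    have h0 := hcont 0 (Set.left_mem_Icc.2 zero_le_one)
    simpa using h0.tendsto.mono_left (nhdsWithin_le_of_mem (Icc_mem_nhdsGT zero_lt_one))
  refine ge_of_tendsto hlim ?_
  filter_upwards [Ioc_mem_nhdsGT (zero_lt_one' ℝ)] with t ht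
  have htest := hminty _ (hmem t ⟨ht.1.le, ht.2⟩)
  rw [add_sub_cancel_left, inner_smul_right] at htest
  exact nonneg_of_mul_nonneg_right htest ht.1

/-- Demiclosedness of `F + N_C` at `0`, phrased through the inequality which `x i` and a residual
`G i ∈ F (x i) + N_C (x i)` satisfy by monotonicity. -/
theorem IsVISolution.of_weaklyTendsto {l : Filter ι} [l.NeBot] {x G : ι → E}
    (hC : IsComplete C) (hconv : Convex ℝ C) (hF : ContinuousOn F C) (hx : ∀ i, x i ∈ C)
    (hG : Tendsto G l (𝓝 0)) (hxG : ∀ i, ∀ v ∈ C, 0 ≤ ⟪G i - F v, x i - v⟫)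
    (hbdd : IsBoundedUnder (· ≤ ·) l fun i => ‖x i‖) (hw : WeaklyTendsto x l w) :
    IsVISolution F C w := by
  refine .of_minty hconv hF (hw.mem_of_isComplete_of_convex hC hconv hx) fun v hv => ?_
  have hGx : Tendsto (fun i => ⟪G i, x i⟫) l (𝓝 0) :=
    hG.op_zero_isBoundedUnder_le hbdd (fun a b => ⟪a, b⟫) norm_inner_le_norm
  have hGv : Tendsto (fun i => ⟪G i, v⟫) l (𝓝 0) := by
    simpa using hG.inner (tendsto_const_nhds (x := v))
  have hlim : Tendsto (fun i => ⟪G i - F v, x i - v⟫) l (𝓝 (0 - 0 - (⟪w, F v⟫ - ⟪v, F v⟫))) := by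
    refine ((hGx.sub hGv).sub ((hw (F v)).sub_const _)).congr fun i => ?_
    rw [inner_sub_left, inner_sub_right, inner_sub_right, real_inner_comm (x i) (F v),
      real_inner_comm v (F v)]
  have := ge_of_tendsto' hlim fun i => hxG i v hv
  rw [inner_sub_right, real_inner_comm v (F v), real_inner_comm w (F v)]
  linarith

end VariationalInequality

section SquaredNorm

variable {E : Type*} [SeminormedAddCommGroup E]

theorem sq_norm_smul [NormedSpace ℝ E] (a : ℝ) (x : E) : ‖a • x‖ ^ 2 = a ^ 2 * ‖x‖ ^ 2 := by
  rw [norm_smul, mul_pow, Real.norm_eq_abs, sq_abs]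

theorem tendsto_zero_iff_tendsto_sq_norm {ι : Type*} {l : Filter ι} {x : ι → E} :
    Tendsto x l (𝓝 0) ↔ Tendsto (fun i => ‖x i‖ ^ 2) l (𝓝 0) := by
  rw [tendsto_zero_iff_norm_tendsto_zero]
  exact ⟨fun hx => by simpa using hx.pow 2, fun hx => by simpa using hx.sqrt⟩

end SquaredNorm

section Iteration

variable {E : Type*} [NormedAddCommGroup E] [InnerProductSpace ℝ E]

/-- The parameter conditions of the convergence theorem, for a Lipschitz constant `L`. The step size
bound is written without division, so that `L = 0` is allowed. -/
structure AdmissibleParameters (L : ℝ≥0) (s r D : ℝ) : Prop where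
  s_pos : 0 < s
  mul_lt_one : s * L < 1
  one_lt_r : 1 < r
  D_pos : 0 < D
  D_lt : D < (r - 1) * s

namespace AdmissibleParameters

variable {L : ℝ≥0} {s r D : ℝ}

theorem r_pos (hp : AdmissibleParameters L s r D) : 0 < r :=
  zero_lt_one.trans hp.one_lt_r

theorem one_sub_sq_div_pos (hp : AdmissibleParameters L s r D) : 0 < (1 - (s * L) ^ 2) / s :=
  have hsL : 0 ≤ s * L := mul_nonneg hp.s_pos.le L.coe_nonneg
  div_pos (sub_pos.2 (pow_lt_one₀ hsL hp.mul_lt_one two_ne_zero)) hp.s_pos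

theorem mul_sub_pos (hp : AdmissibleParameters L s r D) : 0 < (r - 1) * s - D :=
  sub_pos.2 hp.D_lt

theorem sub_div_pos (hp : AdmissibleParameters L s r D) : 0 < s - D / (r - 1) :=
  sub_pos.2 ((div_lt_iff₀' (sub_pos.2 hp.one_lt_r)).2 hp.D_lt)

end AdmissibleParameters

/-- The vector `F (z_{k+1/2}) + C̃_{k+1}` driving the full step, where `zh k` stands for
`z_{k+1/2}` and `C̃_{k+1} = G (k + 1) - F (z (k + 1))`. -/
def halfResidual (F : E → E) (z zh G : ℕ → E) (k : ℕ) : E :=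
  F (zh k) + (G (k + 1) - F (z (k + 1)))

/-- The SPEG+ iteration, with `zh k` for `z_{k+1/2}` and the residual `G k = F (z_k) + C̃_k` in
place of `C̃_k`. The averaged points `z̃` are eliminated and denominators `k + r` cleared. -/
structure IsSPEGPlus (F : E → E) (C : Set E) (s r D : ℝ) (z zh u G : ℕ → E) : Prop where
  mem : ∀ k, z k ∈ C
  half_mem : ∀ k, zh k ∈ C
  normal : ∀ k, ∀ v ∈ C, ⟪G k - F (z k), v - z k⟫ ≤ 0
  half_step : ∀ k : ℕ, ∀ v ∈ C,
    ⟪(k : ℝ) • z k + r • u k - (k * s) • F (z k) - ((k : ℝ) + r) • zh k, v - zh k⟫ ≤ 0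
  full_step : ∀ k : ℕ, ((k : ℝ) + r) • z (k + 1) =
    (k : ℝ) • z k + r • u k - s • ((k : ℝ) + r) • halfResidual F z zh G k
  anchor_step : ∀ k, u (k + 1) = u k - (D / r) • G (k + 1)

theorem IsSPEGPlus.of_projections {F : E → E} {C : Set E} {s r D : ℝ} {z zh zt u c : ℕ → E}
    (hs : 0 < s) (hr : 0 < r) (hz0 : z 0 ∈ C) (hc0 : c 0 = 0)
    (hzt : ∀ k : ℕ, zt (k + 1) = ((k : ℝ) / (k + r)) • z k + (r / (k + r)) • u k)
    (hzhC : ∀ k, zh k ∈ C)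
    (hzhproj : ∀ k : ℕ, ∀ v ∈ C,
      ⟪zt (k + 1) - (k * s / (k + r)) • F (z k) - zh k, v - zh k⟫ ≤ 0)
    (hzC : ∀ k, z (k + 1) ∈ C)
    (hzproj : ∀ k, ∀ v ∈ C, ⟪zt (k + 1) - s • F (zh k) - z (k + 1), v - z (k + 1)⟫ ≤ 0)
    (hc : ∀ k, c (k + 1) = s⁻¹ • (zt (k + 1) - s • F (zh k) - z (k + 1)))
    (hu : ∀ k, u (k + 1) = u k - (D / r) • (F (z (k + 1)) + c (k + 1))) :
    IsSPEGPlus F C s r D z zh u fun k => F (z k) + c k := by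
  have hkr (k : ℕ) : 0 < (k : ℝ) + r := by positivity
  have hzt' (k : ℕ) : ((k : ℝ) + r) • zt (k + 1) = (k : ℝ) • z k + r • u k := by
    rw [hzt, smul_add, smul_smul, smul_smul, mul_div_cancel₀ _ (hkr k).ne',
      mul_div_cancel₀ _ (hkr k).ne']
  refine ⟨fun k => ?_, hzhC, fun k v hv => ?_, fun k v hv => ?_, fun k => ?_, hu⟩
  · cases k with
    | zero => exact hz0
    | succ k => exact hzC k
  · rw [add_sub_cancel_left]
    cases k with
    | zero => rw [hc0, inner_zero_left]
    | succ k =>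
      rw [hc, real_inner_smul_left]
      exact mul_nonpos_of_nonneg_of_nonpos (inv_nonneg.2 hs.le) (hzproj k v hv)
  · have hscale : (k : ℝ) • z k + r • u k - (k * s) • F (z k) - ((k : ℝ) + r) • zh k
        = ((k : ℝ) + r) • (zt (k + 1) - (k * s / (k + r)) • F (z k) - zh k) := by
      rw [smul_sub, smul_sub, hzt', smul_smul, mul_div_cancel₀ _ (hkr k).ne']
    rw [hscale, real_inner_smul_left]
    exact mul_nonpos_of_nonneg_of_nonpos (hkr k).le (hzhproj k v hv)
  · have hsc : s • c (k + 1) = zt (k + 1) - s • F (zh k) - z (k + 1) := by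
      rw [hc, smul_inv_smul₀ hs.ne']
    rw [halfResidual, add_sub_cancel_left, smul_comm s, smul_add s, hsc, ← hzt', ← smul_sub]
    congr 1
    abel

namespace IsSPEGPlus

variable {F : E → E} {C : Set E} {L : ℝ≥0} {s r D : ℝ} {z zh u G : ℕ → E} {w : E}

theorem inner_residual_sub_nonneg (h : IsSPEGPlus F C s r D z zh u G)
    (hmono : InnerMonotoneOn F C) (k : ℕ) {v : E} (hv : v ∈ C) : 0 ≤ ⟪G k - F v, z k - v⟫ := by
  have hF := hmono _ (h.mem k) v hv
  have hN := h.normal k v hv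
  rw [← neg_sub (z k), inner_neg_right] at hN
  rw [← sub_add_sub_cancel _ (F (z k)), inner_add_left]
  linarith

theorem inner_residual_solution_nonneg (h : IsSPEGPlus F C s r D z zh u G)
    (hmono : InnerMonotoneOn F C) (hw : IsVISolution F C w) (k : ℕ) : 0 ≤ ⟪G k, z k - w⟫ := by
  have hG := h.inner_residual_sub_nonneg hmono k hw.1
  rw [inner_sub_left] at hG
  linarith [hw.2 _ (h.mem k)]

theorem natCast_smul_sub (h : IsSPEGPlus F C s r D z zh u G) (k : ℕ) :
    (k : ℝ) • (z (k + 1) - z k)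
      = r • (u k - z (k + 1)) - s • ((k : ℝ) + r) • halfResidual F z zh G k := by
  linear_combination (norm := module) h.full_step k

theorem natCast_add_smul_sub (h : IsSPEGPlus F C s r D z zh u G) (k : ℕ) :
    ((k : ℝ) + r) • (z (k + 1) - z k)
      = r • (u k - z k) - s • ((k : ℝ) + r) • halfResidual F z zh G k := by
  linear_combination (norm := module) h.full_step k

/-- Monotonicity between `z k` and `z (k + 1)`, weighted by `k * (k + r)`; each of the two inner
products it produces is rewritten by a different rescaling of the full step. -/
theorem inner_residual_diff_add_le (h : IsSPEGPlus F C s r D z zh u G) (hmono : InnerMonotoneOn F C)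
    (hr : 0 ≤ r) (k : ℕ) :
    r * (⟪((k : ℝ) + r) • G (k + 1), z (k + 1) - u k⟫ - ⟪(k : ℝ) • G k, z k - u k⟫)
      + s * ⟪((k : ℝ) + r) • G (k + 1) - (k : ℝ) • G k, ((k : ℝ) + r) • halfResidual F z zh G k⟫
      ≤ k * (k + r) * ⟪G k - F (z k), z (k + 1) - z k⟫ := by
  set W := ((k : ℝ) + r) • halfResidual F z zh G k with hW
  have hmon : 0 ≤ (k : ℝ) * (k + r) * ⟪G (k + 1) - F (z k), z (k + 1) - z k⟫ :=
    mul_nonneg (by positivity) (h.inner_residual_sub_nonneg hmono (k + 1) (h.mem k))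
  have hX := congrArg (fun y => ((k : ℝ) + r) * ⟪G (k + 1), y⟫) (h.natCast_smul_sub k)
  have hY := congrArg (fun y => (k : ℝ) * ⟪G k, y⟫) (h.natCast_add_smul_sub k)
  simp only [← hW, inner_sub_left, inner_sub_right, real_inner_smul_left,
    real_inner_smul_right] at hmon hX hY ⊢
  linarith

/-- Obtained by testing the half step at `z (k + 1)` and the normality of `G k - F (z k)` at
`zh k`. -/
theorem sq_norm_half_sub_add_le (h : IsSPEGPlus F C s r D z zh u G) (hs : 0 ≤ s) (hr : 0 ≤ r)
    (k : ℕ) :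
    ‖((k : ℝ) + r) • (z (k + 1) - zh k)‖ ^ 2
        + 2 * s * (k * (k + r) * ⟪G k - F (z k), z (k + 1) - z k⟫)
      ≤ s ^ 2 * ‖(k : ℝ) • G k - ((k : ℝ) + r) • halfResidual F z zh G k‖ ^ 2 := by
  set W := ((k : ℝ) + r) • halfResidual F z zh G k
  set e := ((k : ℝ) + r) • (z (k + 1) - zh k) with he
  set M := (k : ℝ) • z k + r • u k - (k * s) • F (z k) - ((k : ℝ) + r) • zh k
  have hsplit : e = s • ((k : ℝ) • G k - W) + M - (s * k) • (G k - F (z k)) := by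
    linear_combination (norm := module) h.full_step k
  have hMe : ⟪M, e⟫ ≤ 0 := by
    rw [he, real_inner_smul_right]
    exact mul_nonpos_of_nonneg_of_nonpos (by positivity) (h.half_step k _ (h.mem _))
  have hce : ⟪G k - F (z k), e⟫ = (k + r) * (⟪G k - F (z k), z (k + 1) - z k⟫
      - ⟪G k - F (z k), zh k - z k⟫) := by
    rw [he, real_inner_smul_right, ← inner_sub_right, sub_sub_sub_cancel_right]
  have hc : s * k * (k + r) * ⟪G k - F (z k), zh k - z k⟫ ≤ 0 :=
    mul_nonpos_of_nonneg_of_nonpos (by positivity) (h.normal k _ (h.half_mem k))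
  have hinner := congrArg (fun y => ⟪y, e⟫) hsplit
  have hsq := sq_nonneg ‖s • ((k : ℝ) • G k - W) - e‖
  rw [norm_sub_sq_real, sq_norm_smul] at hsq
  simp only [inner_sub_left (_ + _), inner_add_left, real_inner_smul_left (_ - _) _ (s * k), hce,
    real_inner_self_eq_norm_sq] at hinner
  linarith

theorem sq_norm_residual_sub_half_le (h : IsSPEGPlus F C s r D z zh u G)
    (hF : LipschitzOnWith L F C) (k : ℕ) :
    ‖((k : ℝ) + r) • G (k + 1) - ((k : ℝ) + r) • halfResidual F z zh G k‖ ^ 2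
      ≤ L ^ 2 * ‖((k : ℝ) + r) • (z (k + 1) - zh k)‖ ^ 2 := by
  have hsub : G (k + 1) - halfResidual F z zh G k = F (z (k + 1)) - F (zh k) := by
    rw [halfResidual]; abel
  rw [← smul_sub, hsub, sq_norm_smul, sq_norm_smul, mul_left_comm ((L : ℝ) ^ 2), ← mul_pow (L : ℝ)]
  gcongr
  simpa only [dist_eq_norm] using hF.dist_le_mul _ (h.mem (k + 1)) _ (h.half_mem k)

theorem residual_diff_add_nonpos (h : IsSPEGPlus F C s r D z zh u G) (hF : LipschitzOnWith L F C)
    (hmono : InnerMonotoneOn F C) (hs : 0 < s) (hr : 0 ≤ r) (k : ℕ) :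
    2 * r * (⟪((k : ℝ) + r) • G (k + 1), z (k + 1) - u k⟫ - ⟪(k : ℝ) • G k, z k - u k⟫)
      + s * (‖((k : ℝ) + r) • G (k + 1)‖ ^ 2 - ‖(k : ℝ) • G k‖ ^ 2)
      + (1 - (s * L) ^ 2) / s * ‖((k : ℝ) + r) • (z (k + 1) - zh k)‖ ^ 2 ≤ 0 := by
  have hcross := mul_le_mul_of_nonneg_left (h.inner_residual_diff_add_le hmono hr k)
    (by positivity : 0 ≤ 2 * s)
  have hextra := h.sq_norm_half_sub_add_le hs.le hr k
  have hLip := mul_le_mul_of_nonneg_left (h.sq_norm_residual_sub_half_le hF k) (sq_nonneg s)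
  set W := ((k : ℝ) + r) • halfResidual F z zh G k
  set X := ((k : ℝ) + r) • G (k + 1)
  set Y := (k : ℝ) • G k
  have hpolar : 2 * ⟪X - Y, W⟫ = ‖X‖ ^ 2 - ‖Y‖ ^ 2 - ‖X - W‖ ^ 2 + ‖Y - W‖ ^ 2 := by
    rw [norm_sub_sq_real, norm_sub_sq_real, inner_sub_left]; ring
  have hcancel : s * ((1 - (s * L) ^ 2) / s) = 1 - (s * L) ^ 2 := mul_div_cancel₀ _ hs.ne'
  refine nonpos_of_mul_nonpos_right ?_ hs
  linear_combination hcross + hextra + hLip - s ^ 2 * hpolar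
    + ‖((k : ℝ) + r) • (z (k + 1) - zh k)‖ ^ 2 * hcancel

/-- The Lyapunov function
`2rk⟪G_k, z_k - u_k⟫ + sk²‖G_k‖² + (r²(r - 1)/D)‖u_k - w‖²`; the last coefficient is the one which
cancels the indefinite inner products in the one-step inequality. -/
noncomputable def energy (s r D : ℝ) (z u G : ℕ → E) (w : E) (k : ℕ) : ℝ :=
  2 * r * (k * ⟪G k, z k - u k⟫) + s * (k * ‖G k‖) ^ 2 + r ^ 2 * (r - 1) / D * ‖u k - w‖ ^ 2

theorem sq_norm_anchor_sub (h : IsSPEGPlus F C s r D z zh u G) (w : E) (k : ℕ) :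
    ‖u k - w‖ ^ 2 = ‖u (k + 1) - w‖ ^ 2
      + 2 * (D / r) * (⟪G (k + 1), z (k + 1) - w⟫ - ⟪G (k + 1), z (k + 1) - u (k + 1)⟫)
      + (D / r) ^ 2 * ‖G (k + 1)‖ ^ 2 := by
  have hu : u k - w = u (k + 1) - w + (D / r) • G (k + 1) := by
    rw [h.anchor_step]; abel
  rw [hu, norm_add_sq_real, sq_norm_smul, real_inner_smul_right, real_inner_comm,
    ← inner_sub_right, sub_sub_sub_cancel_left]
  ring

theorem energy_succ_add_le (h : IsSPEGPlus F C s r D z zh u G) (hF : LipschitzOnWith L F C)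
    (hmono : InnerMonotoneOn F C) (hs : 0 < s) (hr : 1 ≤ r) (hD0 : 0 < D) (hD : D ≤ (r - 1) * s)
    (hw : IsVISolution F C w) (k : ℕ) :
    energy s r D z u G w (k + 1)
        + ((1 - (s * L) ^ 2) / s * (((k : ℝ) + r) * ‖z (k + 1) - zh k‖) ^ 2
          + ((r - 1) * s - D) * ((((k + 1 : ℕ) : ℝ) + r) * ‖G (k + 1)‖ ^ 2))
      ≤ energy s r D z u G w k := by
  have hr0 : 0 < r := by linarith
  have hinner : ⟪G (k + 1), z (k + 1) - u k⟫
      = ⟪G (k + 1), z (k + 1) - u (k + 1)⟫ - D / r * ‖G (k + 1)‖ ^ 2 := by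
    rw [h.anchor_step k, ← sub_add, inner_add_right, real_inner_smul_right,
      real_inner_self_eq_norm_sq, add_sub_cancel_right]
  have hstep := h.residual_diff_add_nonpos hF hmono hs hr0.le k
  have hb : 0 ≤ 2 * r * (r - 1) * ⟪G (k + 1), z (k + 1) - w⟫ :=
    mul_nonneg (mul_nonneg (by positivity) (sub_nonneg.2 hr))
      (h.inner_residual_solution_nonneg hmono hw (k + 1))
  have hg : 0 ≤ ((r - 1) * s - D) * (k * ‖G (k + 1)‖ ^ 2) :=
    mul_nonneg (sub_nonneg.2 hD) (by positivity)
  have hcoef₁ : r ^ 2 * (r - 1) / D * (2 * (D / r)) = 2 * r * (r - 1) := by field_simp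
  have hcoef₂ : r ^ 2 * (r - 1) / D * (D / r) ^ 2 = (r - 1) * D := by field_simp
  have hcoef₃ : r * (D / r) = D := mul_div_cancel₀ D hr0.ne'
  rw [energy, energy, h.sq_norm_anchor_sub w k]
  simp only [real_inner_smul_left, hinner, sq_norm_smul] at hstep
  push_cast
  set a := ⟪G (k + 1), z (k + 1) - u (k + 1)⟫
  set b := ⟪G (k + 1), z (k + 1) - w⟫
  linear_combination hstep + hb + hg - (b - a) * hcoef₁ - ‖G (k + 1)‖ ^ 2 * hcoef₂
    + 2 * (k + r) * ‖G (k + 1)‖ ^ 2 * hcoef₃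

theorem le_energy (h : IsSPEGPlus F C s r D z zh u G) (hmono : InnerMonotoneOn F C)
    (hr : 1 < r) (hD0 : 0 < D) (hw : IsVISolution F C w) (k : ℕ) :
    (s - D / (r - 1)) * (k * ‖G k‖) ^ 2 ≤ energy s r D z u G w k := by
  have hr1 : 0 < r - 1 := sub_pos.2 hr
  obtain ⟨σ, hσ, hDσ⟩ : ∃ σ, 0 < σ ∧ D = σ * (r - 1) := ⟨D / (r - 1), by positivity, by field_simp⟩
  have hb : 0 ≤ 2 * r * k * ⟪G k, z k - w⟫ :=
    mul_nonneg (by positivity) (h.inner_residual_solution_nonneg hmono hw k)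
  have hsq : 0 ≤ σ⁻¹ * ‖(σ * k) • G k - r • (u k - w)‖ ^ 2 := by positivity
  have hsplit : ⟪G k, u k - w⟫ = ⟪G k, z k - w⟫ - ⟪G k, z k - u k⟫ := by
    rw [← inner_sub_right, sub_sub_sub_cancel_left]
  rw [norm_sub_sq_real, real_inner_smul_left, real_inner_smul_right, hsplit, sq_norm_smul,
    sq_norm_smul] at hsq
  rw [energy, hDσ, mul_div_cancel_right₀ _ hr1.ne', mul_div_mul_right _ _ hr1.ne']
  have hcancel : σ⁻¹ * σ = 1 := inv_mul_cancel₀ hσ.ne'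
  linear_combination hsq + hb
    + (σ * (k * ‖G k‖) ^ 2 - 2 * r * k * (⟪G k, z k - w⟫ - ⟪G k, z k - u k⟫)) * hcancel


theorem natCast_add_smul_sub_anchor_succ (h : IsSPEGPlus F C s r D z zh u G) (k : ℕ) :
    ((k : ℝ) + r) • (z (k + 1) - u (k + 1)) = (k : ℝ) • (z k - u k)
      + ((D / r) • ((k : ℝ) + r) • G (k + 1) - s • ((k : ℝ) + r) • halfResidual F z zh G k) := by
  linear_combination (norm := module) h.full_step k - ((k : ℝ) + r) • h.anchor_step k

theorem sq_norm_sub_anchor_succ_add_le (h : IsSPEGPlus F C s r D z zh u G) (hr : 0 < r) (k : ℕ) :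
    ‖z (k + 1) - u (k + 1)‖ ^ 2 + r * (1 / (k + r) * ‖z k - u k‖ ^ 2)
      ≤ ‖z k - u k‖ ^ 2 + r⁻¹ * (1 / (k + r) * ‖(D / r) • ((k : ℝ) + r) • G (k + 1)
        - s • ((k : ℝ) + r) • halfResidual F z zh G k‖ ^ 2) := by
  have hkr : 0 < (k : ℝ) + r := by positivity
  have hrec := h.natCast_add_smul_sub_anchor_succ k
  set Q := (D / r) • ((k : ℝ) + r) • G (k + 1) - s • ((k : ℝ) + r) • halfResidual F z zh G k
  have hcomb : z (k + 1) - u (k + 1)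
      = ((k : ℝ) / (k + r)) • (z k - u k) + (r / (k + r)) • (r⁻¹ • Q) := by
    rw [← inv_smul_smul₀ hkr.ne' (z (k + 1) - u (k + 1)), hrec, smul_add, smul_smul, smul_smul]
    congr 2 <;> field_simp
  have hconv : ‖z (k + 1) - u (k + 1)‖ ^ 2
      ≤ (k : ℝ) / (k + r) * ‖z k - u k‖ ^ 2 + r / (k + r) * ‖r⁻¹ • Q‖ ^ 2 := by
    rw [hcomb]
    exact (convexOn_univ_norm.pow (fun _ _ => norm_nonneg _) 2).2 trivial trivial
      (by positivity) (by positivity) (by field_simp)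
  rw [sq_norm_smul] at hconv
  calc _ ≤ (k : ℝ) / (k + r) * ‖z k - u k‖ ^ 2 + r / (k + r) * (r⁻¹ ^ 2 * ‖Q‖ ^ 2)
          + r * (1 / (k + r) * ‖z k - u k‖ ^ 2) := by gcongr
    _ = _ := by field_simp; ring

section Convergence

variable (h : IsSPEGPlus F C s r D z zh u G) (hF : LipschitzOnWith L F C)
  (hmono : InnerMonotoneOn F C) (hp : AdmissibleParameters L s r D) (hw : IsVISolution F C w)
include h hF hmono hp hw

theorem summable_dissipation_and_exists_tendsto_energy :
    (Summable fun k : ℕ => (1 - (s * L) ^ 2) / s * (((k : ℝ) + r) * ‖z (k + 1) - zh k‖) ^ 2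
      + ((r - 1) * s - D) * ((((k + 1 : ℕ) : ℝ) + r) * ‖G (k + 1)‖ ^ 2)) ∧
    ∃ l, Tendsto (energy s r D z u G w) atTop (𝓝 l) := by
  have hdescent := h.energy_succ_add_le hF hmono hp.s_pos hp.one_lt_r.le hp.D_pos hp.D_lt.le hw
  refine summable_and_exists_tendsto_of_succ_add_le (y := 0) ⟨0, ?_⟩ (fun k => ?_)
    summable_zero fun k => (hdescent k).trans_eq (add_zero _).symm
  · rintro _ ⟨k, rfl⟩
    exact (mul_nonneg hp.sub_div_pos.le (sq_nonneg _)).trans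
      (h.le_energy hmono hp.one_lt_r hp.D_pos hw k)
  · have := hp.one_sub_sq_div_pos
    have := hp.mul_sub_pos
    have := hp.r_pos
    positivity

theorem summable_sq_norm_half_sub :
    Summable fun k : ℕ => (((k : ℝ) + r) * ‖z (k + 1) - zh k‖) ^ 2 := by
  have := hp.one_sub_sq_div_pos
  have := hp.mul_sub_pos
  have := hp.r_pos
  exact (summable_mul_left_iff hp.one_sub_sq_div_pos.ne').1 (.of_nonneg_of_le
    (fun k => by positivity) (fun k => le_add_of_nonneg_right (by positivity))
    (h.summable_dissipation_and_exists_tendsto_energy hF hmono hp hw).1)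

theorem summable_sq_norm_residual : Summable fun k : ℕ => ((k : ℝ) + r) * ‖G k‖ ^ 2 := by
  have := hp.one_sub_sq_div_pos
  have := hp.mul_sub_pos
  have := hp.r_pos
  exact (summable_nat_add_iff 1).1 ((summable_mul_left_iff hp.mul_sub_pos.ne').1 (.of_nonneg_of_le
    (fun k => by positivity) (fun k => le_add_of_nonneg_left (by positivity))
    (h.summable_dissipation_and_exists_tendsto_energy hF hmono hp hw).1))

theorem isBoundedUnder_norm_natCast_smul_residual :
    IsBoundedUnder (· ≤ ·) atTop fun k : ℕ => ‖(k : ℝ) • G k‖ := by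
  obtain ⟨-, l, hl⟩ := h.summable_dissipation_and_exists_tendsto_energy hF hmono hp hw
  refine (hl.div_const (s - D / (r - 1))).sqrt.isBoundedUnder_le.mono_le (.of_forall fun k => ?_)
  have hsq := (le_div_iff₀' hp.sub_div_pos).2 (h.le_energy hmono hp.one_lt_r hp.D_pos hw k)
  simpa only [norm_smul, Real.norm_natCast] using Real.le_sqrt_of_sq_le hsq

theorem summable_sq_norm_sub_anchor_perturbation :
    Summable fun k : ℕ => 1 / ((k : ℝ) + r) * ‖(D / r) • ((k : ℝ) + r) • G (k + 1)
      - s • ((k : ℝ) + r) • halfResidual F z zh G k‖ ^ 2 := by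
  have hg := (summable_nat_add_iff 1).2
    (h.summable_sq_norm_residual hF hmono hp hw)
  have he := h.summable_sq_norm_half_sub hF hmono hp hw
  have hr := hp.r_pos
  refine .of_nonneg_of_le (fun k => by positivity) (fun k => ?_)
    ((hg.mul_left (2 * (D / r - s) ^ 2)).add (he.mul_left (2 * s ^ 2 * L ^ 2)))
  have hLip := h.sq_norm_residual_sub_half_le hF k
  have hkr : 1 ≤ (k : ℝ) + r := le_add_of_nonneg_of_le k.cast_nonneg hp.one_lt_r.le
  have hX : ‖((k : ℝ) + r) • G (k + 1)‖ ^ 2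
      ≤ (k + r) * ((((k + 1 : ℕ) : ℝ) + r) * ‖G (k + 1)‖ ^ 2) := by
    rw [sq_norm_smul, sq, mul_assoc]
    gcongr
    simp
  rw [norm_smul _ (_ - _), Real.norm_of_nonneg (by positivity)] at hLip
  set W := ((k : ℝ) + r) • halfResidual F z zh G k
  set X := ((k : ℝ) + r) • G (k + 1)
  set e := (((k : ℝ) + r) * ‖z (k + 1) - zh k‖) ^ 2
  have hQ : ‖(D / r) • X - s • W‖ ^ 2 ≤ 2 * ((D / r - s) ^ 2 * ‖X‖ ^ 2 + s ^ 2 * ‖X - W‖ ^ 2) := by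
    have hsplit : (D / r) • X - s • W = (D / r - s) • X + s • (X - W) := by module
    rw [hsplit, ← sq_norm_smul, ← sq_norm_smul]
    exact (pow_le_pow_left₀ (norm_nonneg _) (norm_add_le _ _) 2).trans add_sq_le
  rw [one_div_mul_eq_div, div_le_iff₀' (by positivity)]
  calc _ ≤ 2 * ((D / r - s) ^ 2 * ((k + r) * ((((k + 1 : ℕ) : ℝ) + r) * ‖G (k + 1)‖ ^ 2))
          + s ^ 2 * (L ^ 2 * ((k + r) * e))) := by
        refine hQ.trans ?_
        gcongr
        exact hLip.trans (by gcongr; exact le_mul_of_one_le_left (by positivity) hkr)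
    _ = _ := by ring

theorem summable_and_tendsto_sq_norm_sub_anchor :
    (Summable fun k : ℕ => 1 / ((k : ℝ) + r) * ‖z k - u k‖ ^ 2) ∧
      Tendsto (fun k => ‖z k - u k‖ ^ 2) atTop (𝓝 0) := by
  have hr := hp.r_pos
  obtain ⟨hsum, l, hl⟩ := summable_and_exists_tendsto_of_succ_add_le
    (V := fun k => ‖z k - u k‖ ^ 2) ⟨0, by rintro _ ⟨k, rfl⟩; positivity⟩ (fun k => by positivity)
    ((h.summable_sq_norm_sub_anchor_perturbation hF hmono hp hw).mul_left r⁻¹)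
    (h.sq_norm_sub_anchor_succ_add_le hr)
  have hsum' := (summable_mul_left_iff hr.ne').1 hsum
  have hl0 := eq_zero_of_tendsto_of_summable_mul (not_summable_one_div_natCast_add r) hl hsum'
  exact ⟨hsum', hl0 ▸ hl⟩

theorem tendsto_sub_anchor : Tendsto (fun k => z k - u k) atTop (𝓝 0) :=
  tendsto_zero_iff_tendsto_sq_norm.2
    (h.summable_and_tendsto_sq_norm_sub_anchor hF hmono hp hw).2

theorem tendsto_natCast_mul_inner_sub_anchor :
    Tendsto (fun k : ℕ => (k : ℝ) * ⟪G k, z k - u k⟫) atTop (𝓝 0) := by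
  have hlim := (h.tendsto_sub_anchor hF hmono hp hw).op_zero_isBoundedUnder_le
    (h.isBoundedUnder_norm_natCast_smul_residual hF hmono hp hw)
    (fun x y => ⟪x, y⟫) norm_inner_le_norm
  refine hlim.congr fun k => ?_
  rw [real_inner_smul_right, real_inner_comm]

theorem summable_inner_sub_anchor : Summable fun k => ⟪G k, z k - u k⟫ := by
  have hr := hp.r_pos
  refine .of_norm_bounded
    ((h.summable_sq_norm_residual hF hmono hp hw).add
      (h.summable_and_tendsto_sq_norm_sub_anchor hF hmono hp hw).1) fun k => ?_
  have hkr : 0 < (k : ℝ) + r := by positivity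
  have hamgm : 2 * (‖G k‖ * ‖z k - u k‖)
      ≤ (k + r) * ‖G k‖ ^ 2 + 1 / (k + r) * ‖z k - u k‖ ^ 2 := by
    have hsq : 0 ≤ 1 / ((k : ℝ) + r) * ((k + r) * ‖G k‖ - ‖z k - u k‖) ^ 2 := by positivity
    field_simp at hsq ⊢
    linarith
  have hnonneg : 0 ≤ ‖G k‖ * ‖z k - u k‖ := by positivity
  linarith [norm_inner_le_norm (𝕜 := ℝ) (G k) (z k - u k)]

theorem exists_tendsto_norm_anchor_sub : ∃ l, Tendsto (fun k => ‖u k - w‖) atTop (𝓝 l) := by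
  have := hp.r_pos
  have := hp.D_pos
  have ha := (summable_nat_add_iff 1).2
    (h.summable_inner_sub_anchor hF hmono hp hw)
  obtain ⟨-, l, hl⟩ := summable_and_exists_tendsto_of_succ_add_le (V := fun k => ‖u k - w‖ ^ 2)
    (x := 0) ⟨0, by rintro _ ⟨k, rfl⟩; positivity⟩ (fun _ => le_rfl) (ha.mul_left (2 * (D / r)))
    fun k => by
      have hb := h.inner_residual_solution_nonneg hmono hw (k + 1)
      have hdrop : 0 ≤ 2 * (D / r) * ⟪G (k + 1), z (k + 1) - w⟫
        + (D / r) ^ 2 * ‖G (k + 1)‖ ^ 2 := by positivity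
      rw [h.sq_norm_anchor_sub w k, Pi.zero_apply]
      linarith
  exact ⟨√l, hl.sqrt.congr fun k => Real.sqrt_sq (norm_nonneg _)⟩

theorem tendsto_natCast_smul_residual : Tendsto (fun k : ℕ => (k : ℝ) • G k) atTop (𝓝 0) := by
  have hr := hp.r_pos
  obtain ⟨-, a, ha⟩ := h.summable_dissipation_and_exists_tendsto_energy hF hmono hp hw
  obtain ⟨b, hb⟩ := h.exists_tendsto_norm_anchor_sub hF hmono hp hw
  have hka := h.tendsto_natCast_mul_inner_sub_anchor hF hmono hp hw
  obtain ⟨l, hl⟩ : ∃ l, Tendsto (fun k : ℕ => (k * ‖G k‖) ^ 2) atTop (𝓝 l) := by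
    refine ⟨_, (((ha.sub (hka.const_mul (2 * r))).sub
      ((hb.pow 2).const_mul (r ^ 2 * (r - 1) / D))).div_const s).congr fun k => ?_⟩
    rw [energy, add_sub_right_comm, add_sub_cancel_right, add_sub_cancel_left,
      mul_div_cancel_left₀ _ hp.s_pos.ne']
  have hsum : Summable fun k : ℕ => 1 / ((k : ℝ) + r) * (k * ‖G k‖) ^ 2 := by
    refine .of_nonneg_of_le (fun k => by positivity) (fun k => ?_)
      (h.summable_sq_norm_residual hF hmono hp hw)
    have hkr : 0 < (k : ℝ) + r := by positivity
    rw [one_div_mul_eq_div, div_le_iff₀' hkr, ← mul_assoc, ← sq, ← mul_pow]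
    gcongr
    linarith
  have hl0 := eq_zero_of_tendsto_of_summable_mul (not_summable_one_div_natCast_add r) hl hsum
  exact tendsto_zero_iff_tendsto_sq_norm.2 (by simpa [norm_smul, hl0] using hl)

theorem tendsto_residual : Tendsto G atTop (𝓝 0) := by
  have hlim := tendsto_inv_atTop_nhds_zero_nat (𝕜 := ℝ) |>.smul
    (h.tendsto_natCast_smul_residual hF hmono hp hw)
  rw [smul_zero] at hlim
  refine hlim.congr' ?_
  filter_upwards [eventually_ne_atTop 0] with k hk
  exact inv_smul_smul₀ (Nat.cast_ne_zero.2 hk) _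

theorem tendsto_natCast_add_smul_halfResidual :
    Tendsto (fun k : ℕ => ((k : ℝ) + r) • halfResidual F z zh G k) atTop (𝓝 0) := by
  have hkG := (h.tendsto_natCast_smul_residual hF hmono hp hw).comp
    (tendsto_add_atTop_nat 1)
  have hG := (h.tendsto_residual hF hmono hp hw).comp (tendsto_add_atTop_nat 1)
  have he := (h.summable_sq_norm_half_sub hF hmono hp hw).tendsto_atTop_zero
  have hdiff : Tendsto (fun k : ℕ => ((k : ℝ) + r) • G (k + 1)
      - ((k : ℝ) + r) • halfResidual F z zh G k) atTop (𝓝 0) := by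
    refine tendsto_zero_iff_tendsto_sq_norm.2 (squeeze_zero (fun k => by positivity)
      (fun k => h.sq_norm_residual_sub_half_le hF k) ?_)
    simpa [sq_norm_smul, mul_pow] using he.const_mul ((L : ℝ) ^ 2)
  have hlim := (hkG.add (hG.const_smul (r - 1))).sub hdiff
  rw [smul_zero, add_zero, sub_zero] at hlim
  refine hlim.congr fun k => ?_
  simp only [Function.comp_apply, Nat.cast_add, Nat.cast_one]
  module

theorem tendsto_natCast_smul_succ_sub :
    Tendsto (fun k : ℕ => (k : ℝ) • (z (k + 1) - z k)) atTop (𝓝 0) := by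
  have hzu := (h.tendsto_sub_anchor hF hmono hp hw).comp (tendsto_add_atTop_nat 1)
  have hG := (h.tendsto_residual hF hmono hp hw).comp (tendsto_add_atTop_nat 1)
  have hW := h.tendsto_natCast_add_smul_halfResidual hF hmono hp hw
  have hlim := (((hG.const_smul (D / r)).sub hzu).const_smul r).sub (hW.const_smul s)
  simp only [smul_zero, sub_zero] at hlim
  refine hlim.congr fun k => ?_
  rw [h.natCast_smul_sub k, Function.comp_apply, Function.comp_apply, h.anchor_step k]
  congr 2
  abel

theorem isBoundedUnder_norm_sub (v : E) :
    IsBoundedUnder (· ≤ ·) atTop fun k => ‖z k - v‖ := by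
  have hzu := h.tendsto_sub_anchor hF hmono hp hw
  obtain ⟨l, hl⟩ := h.exists_tendsto_norm_anchor_sub hF hmono hp hw
  exact (hzu.norm.add (hl.add_const ‖w - v‖)).isBoundedUnder_le.mono_le <| .of_forall fun k =>
    (norm_sub_le_norm_sub_add_norm_sub _ (u k) _).trans <|
      add_le_add_right (norm_sub_le_norm_sub_add_norm_sub _ w _) _

theorem tendsto_natCast_mul_inner_sub_solution :
    Tendsto (fun k : ℕ => (k : ℝ) * ⟪G k, z k - w⟫) atTop (𝓝 0) := by
  simpa only [real_inner_smul_left] using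
    (h.tendsto_natCast_smul_residual hF hmono hp hw).op_zero_isBoundedUnder_le
      (h.isBoundedUnder_norm_sub hF hmono hp hw w)
      (fun x y => ⟪x, y⟫) norm_inner_le_norm

theorem exists_isVISolution_weaklyTendsto [CompleteSpace E] (hC : IsClosed C)
    (hconv : Convex ℝ C) :
    ∃ p, IsVISolution F C p ∧ WeaklyTendsto z atTop p ∧ WeaklyTendsto u atTop p := by
  have hzu := h.tendsto_sub_anchor hF hmono hp hw
  have hG := h.tendsto_residual hF hmono hp hw
  have hbdd : IsBoundedUnder (· ≤ ·) atTop fun k => ‖z k‖ := by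
    simpa only [sub_zero] using h.isBoundedUnder_norm_sub hF hmono hp hw 0
  obtain ⟨p, hpS, hup⟩ := exists_mem_weaklyTendsto_of_tendsto_norm_sub
    (S := {p | IsVISolution F C p}) ⟨w, hw⟩
    (fun v hv => h.exists_tendsto_norm_anchor_sub hF hmono hp hv)
    fun U p hU hup => .of_weaklyTendsto hC.isComplete hconv hF.continuousOn h.mem (hG.mono_left hU)
      (fun k v hv => h.inner_residual_sub_nonneg hmono k hv) (hbdd.mono hU)
      (hup.of_tendsto_sub (hzu.mono_left hU))
  exact ⟨p, hpS, hup.of_tendsto_sub hzu, hup⟩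

end Convergence

end IsSPEGPlus

theorem speg_faster_rate_and_weak_convergence_general [CompleteSpace E] {F : E → E} {C : Set E}
    {L : ℝ≥0} {s r D : ℝ} {z zh u G : ℕ → E} (h : IsSPEGPlus F C s r D z zh u G)
    (hC : IsClosed C) (hconv : Convex ℝ C) (hF : LipschitzOnWith L F C)
    (hmono : InnerMonotoneOn F C) (hp : AdmissibleParameters L s r D)
    (hsol : ∃ w, IsVISolution F C w) :
    Tendsto (fun k => ‖z k - u k‖ ^ 2) atTop (𝓝 0) ∧
    (∀ w, IsVISolution F C w → ∃ l, Tendsto (fun k => ‖u k - w‖ ^ 2) atTop (𝓝 l)) ∧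
    Tendsto (fun k : ℕ => (k : ℝ) ^ 2 * ‖G k‖ ^ 2) atTop (𝓝 0) ∧
    (∀ w, IsVISolution F C w →
      Tendsto (fun k : ℕ => (k : ℝ) * ⟪G k, z k - w⟫) atTop (𝓝 0)) ∧
    Tendsto (fun k : ℕ => (k : ℝ) ^ 2 * ‖z (k + 1) - z k‖ ^ 2) atTop (𝓝 0) ∧
    ∃ w, IsVISolution F C w ∧ WeaklyTendsto z atTop w ∧ WeaklyTendsto u atTop w := by
  obtain ⟨w, hw⟩ := hsol
  refine ⟨?_, fun v hv => ?_, ?_, fun v hv => ?_, ?_, ?_⟩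
  · exact tendsto_zero_iff_tendsto_sq_norm.1 (h.tendsto_sub_anchor hF hmono hp hw)
  · obtain ⟨l, hl⟩ := h.exists_tendsto_norm_anchor_sub hF hmono hp hv
    exact ⟨_, hl.pow 2⟩
  · simpa only [sq_norm_smul] using
      tendsto_zero_iff_tendsto_sq_norm.1 (h.tendsto_natCast_smul_residual hF hmono hp hw)
  · exact h.tendsto_natCast_mul_inner_sub_solution hF hmono hp hv
  · simpa only [sq_norm_smul] using
      tendsto_zero_iff_tendsto_sq_norm.1 (h.tendsto_natCast_smul_succ_sub hF hmono hp hw)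
  · exact h.exists_isVISolution_weaklyTendsto hF hmono hp hw hC hconv

end Iteration

end SPEGPlus

/-- Faster `o(1/k²)` rate and weak convergence for the step-size-`s` SPEG+ method. -/
theorem speg_faster_rate_and_weak_convergence
    {H : Type*} [NormedAddCommGroup H] [InnerProductSpace ℝ H] [CompleteSpace H]
    (L s r D : ℝ) (F : H → H) (C : Set H)
    (z zh zt u Ct : ℕ → H)
    (hL : 0 < L)
    (hLip : ∀ x y : H, ‖F x - F y‖ ≤ L * ‖x - y‖)
    (hmono : ∀ x y : H, 0 ≤ ⟪F x - F y, x - y⟫)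
    (hCne : C.Nonempty) (hCclosed : IsClosed C) (hCconv : Convex ℝ C)
    (hs0 : 0 < s) (hs1 : s < 1/L)
    (hr : 1 < r) (hD0 : 0 < D) (hD : D < (r - 1) * s)
    (hsol : ∃ w : H, w ∈ C ∧ ∀ v ∈ C, 0 ≤ ⟪F w, v - w⟫)
    (hz0 : z 0 ∈ C) (hu0 : u 0 = z 0) (hC0 : Ct 0 = 0)
    (hzt : ∀ k : ℕ, zt (k+1) = ((k : ℝ)/((k : ℝ) + r)) • z k + (r/((k : ℝ) + r)) • u k)
    (hzhC : ∀ k : ℕ, zh k ∈ C)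
    (hzhproj : ∀ k : ℕ, ∀ w ∈ C,
      ⟪zt (k+1) - (((k : ℝ)*s)/((k : ℝ) + r)) • F (z k) - zh k, w - zh k⟫ ≤ 0)
    (hzC : ∀ k : ℕ, z (k+1) ∈ C)
    (hzproj : ∀ k : ℕ, ∀ w ∈ C,
      ⟪zt (k+1) - s • F (zh k) - z (k+1), w - z (k+1)⟫ ≤ 0)
    (hCt : ∀ k : ℕ, Ct (k+1) = s⁻¹ • (zt (k+1) - s • F (zh k) - z (k+1)))
    (hu : ∀ k : ℕ, u (k+1) = u k - (D/r) • (F (z (k+1)) + Ct (k+1))) :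
    Tendsto (fun k : ℕ => ‖z k - u k‖^2) atTop (nhds 0) ∧
    (∀ zs : H, zs ∈ C → (∀ v ∈ C, 0 ≤ ⟪F zs, v - zs⟫) →
      ∃ l : ℝ, Tendsto (fun k : ℕ => ‖u k - zs‖^2) atTop (nhds l)) ∧
    Tendsto (fun k : ℕ => (k : ℝ)^2 * ‖F (z k) + Ct k‖^2) atTop (nhds 0) ∧
    (∀ zs : H, zs ∈ C → (∀ v ∈ C, 0 ≤ ⟪F zs, v - zs⟫) →
      Tendsto (fun k : ℕ => (k : ℝ) * ⟪F (z k) + Ct k, z k - zs⟫) atTop (nhds 0)) ∧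
    Tendsto (fun k : ℕ => (k : ℝ)^2 * ‖z (k+1) - z k‖^2) atTop (nhds 0) ∧
    (∃ w : H, (w ∈ C ∧ ∀ v ∈ C, 0 ≤ ⟪F w, v - w⟫) ∧
      (∀ y : H, Tendsto (fun k : ℕ => ⟪z k, y⟫) atTop (nhds ⟪w, y⟫)) ∧
      (∀ y : H, Tendsto (fun k : ℕ => ⟪u k, y⟫) atTop (nhds ⟪w, y⟫))) := by
  lift L to ℝ≥0 using hL.le
  obtain ⟨hzu, hnorm, hG, hinner, hstep, w, hw, hweak⟩ :=
    SPEGPlus.speg_faster_rate_and_weak_convergence_general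
      (SPEGPlus.IsSPEGPlus.of_projections hs0 (zero_lt_one.trans hr) hz0 hC0 hzt hzhC hzhproj hzC
        hzproj hCt hu)
      hCclosed hCconv (LipschitzWith.of_dist_le_mul fun x y => by
        simpa only [dist_eq_norm] using hLip x y).lipschitzOnWith
      (fun x _ y _ => hmono x y) ⟨hs0, (lt_div_iff₀ hL).1 hs1, hr, hD0, hD⟩ hsol
  exact ⟨hzu, fun v hvC hv => hnorm v ⟨hvC, hv⟩, hG, fun v hvC hv => hinner v ⟨hvC, hv⟩, hstep,
    w, hw, hweak⟩
end
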